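/- Assume the curve setup with counterclockwise orientation and let a well distributed mesh with parameters κ ≥ 2 and M > 0 be given. Then there exist C > 0 and N₀ such that for every N ≥ N₀, every v ∈ ℝ^{N−1} and every γ ∈ ℝ, there is a unique z ∈ ℝ^N satisfying (L/N)·Σ_{j=1}^{N} B_N(i,j)·z_j = v_i for all 1 ≤ i ≤ N−1 and ⟨z⟩ = γ; moreover this solution satisfies ‖z‖_{ℓ²} ≤ C·(‖v‖ + |γ| + √N·|⟨v⟩|), where ‖v‖ = ((N−1)^{−1}·Σ_{i=1}^{N−1} v_i²)^{1/2} and ⟨v⟩ = (N−1)^{−1}·Σ_{i=1}^{N−1} v_i. -/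

import Mathlib

open Real MeasureTheory

/-- Dot product of two points of the plane `ℝ² ≃ ℂ`. -/
noncomputable def dotR (z w : ℂ) : ℝ := z.re * w.re + z.im * w.im

/-- The discretized singular (tangential) matrix. -/
noncomputable def Bmat (l : ℝ → ℂ) {N : ℕ} (a b : Fin N → ℝ) : Matrix (Fin N) (Fin N) ℝ :=
  Matrix.of fun i j => dotR (l (a i) - l (b j)) (deriv l (a i)) / ‖l (a i) - l (b j)‖ ^ 2

/-- The mean value of a vector. -/
noncomputable def avg {N : ℕ} (z : Fin N → ℝ) : ℝ := (N : ℝ)⁻¹ * ∑ i, z i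

/-- The normalized `ℓ²` norm of a vector. -/
noncomputable def l2norm {N : ℕ} (z : Fin N → ℝ) : ℝ := Real.sqrt ((N : ℝ)⁻¹ * ∑ i, z i ^ 2)

/-!
On a curve of length `L` the tangential kernel is `π / L * cot (π (s - t) / L)` plus a regular part,
which is the `s`-derivative of a periodic function. Sampled at half-shifted uniform nodes, the
cotangent becomes an isometry modulo the mean, so the discrete system is a compact perturbation of
an isometry and stability reduces to uniqueness in the limit. There, testing with the samples of
`φ` turns the system into the pairing of `z` with the log potential of `φ'`. Together with the
constants these potentials span a dense subspace of `L²`: the logarithm is a mixture of Gaussians,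
whence the log energy is definite on densities of mean zero. Finally the column sums of the system
are `O(1 / N)`, so the mean of `v` nearly determines the last entry of `A *ᵥ z`; an error `e` in the
mean displaces that entry by `N e`, which is worth `√N e` in the normalized `ℓ²` norm.
-/

open Set Filter Topology Function

universe u v

/-! ### Divided differences and chord quotients -/

section ParametricIntegral

variable {P : Type u} {F : Type (max u v)} [NormedAddCommGroup P] [NormedSpace ℝ P]
  [NormedAddCommGroup F] [NormedSpace ℝ F]

theorem hasFDerivAt_intervalIntegral_of_contDiff {g : P × ℝ → F} (hg : ContDiff ℝ 1 g)
    (a b : ℝ) (p : P) :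
    HasFDerivAt (fun p ↦ ∫ θ in a..b, g (p, θ))
      (∫ θ in a..b, (fderiv ℝ g (p, θ)).comp (.inl ℝ P ℝ)) p := by
  set g' : P × ℝ → P →L[ℝ] F := fun x ↦ (fderiv ℝ g x).comp (.inl ℝ P ℝ)
  have hg' : Continuous g' := by fun_prop
  obtain ⟨C, hC⟩ := (isCompact_uIcc (a := a) (b := b)).exists_bound_of_continuousOn
    (f := fun θ ↦ g' (p, θ)) (by fun_prop)
  have hbound : ∀ᶠ x in 𝓝 p, ∀ θ ∈ uIcc a b, ‖g' (x, θ)‖ < C + 1 :=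
    isCompact_uIcc.eventually_forall_of_forall_eventually fun θ hθ ↦
      hg'.norm.continuousAt.eventually_lt_const <| (hC θ hθ).trans_lt (lt_add_one C)
  refine intervalIntegral.hasFDerivAt_integral_of_dominated_of_fderiv_le
    (F' := fun x θ ↦ g' (x, θ)) (bound := fun _ ↦ C + 1) hbound
    (.of_forall fun x ↦ by fun_prop) (Continuous.intervalIntegrable (by fun_prop) _ _)
    (by fun_prop) (.of_forall ?_) (by simp) (.of_forall fun θ _ x _ ↦ ?_)
  · exact fun θ hθ x hx ↦ (hx θ (uIoc_subset_uIcc hθ)).le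
  · exact (hg.differentiable one_ne_zero _).hasFDerivAt.comp x (hasFDerivAt_prodMk_left x θ)

theorem contDiff_intervalIntegral {n : ℕ} {g : P × ℝ → F} (hg : ContDiff ℝ n g) (a b : ℝ) :
    ContDiff ℝ n fun p ↦ ∫ θ in a..b, g (p, θ) := by
  induction n generalizing F with
  | zero =>
    rw [Nat.cast_zero, contDiff_zero] at hg ⊢
    exact intervalIntegral.continuous_parametric_intervalIntegral_of_continuous'
      (f := fun p θ ↦ g (p, θ)) hg a b
  | succ n ih =>
    have hderiv := hasFDerivAt_intervalIntegral_of_contDiff (hg.of_le (by simp)) a b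
    push_cast at hg ⊢
    refine contDiff_succ_iff_hasFDerivAt.2
      ⟨_, ih (g := fun x ↦ (fderiv ℝ g x).comp (.inl ℝ P ℝ)) ?_, hderiv⟩
    exact (hg.fderiv_right le_rfl).clm_comp contDiff_const

end ParametricIntegral

section DividedDifference

variable {F : Type v} [NormedAddCommGroup F] [NormedSpace ℝ F]

/-- The divided difference `(φ s - φ t) / (s - t)` of `φ`, extended by `φ' s` to the diagonal;
the integral makes it as smooth as `φ'`. -/
noncomputable def divDiff (φ : ℝ → F) (p : ℝ × ℝ) : F :=
  ∫ θ in (0 : ℝ)..1, deriv φ (p.2 + θ * (p.1 - p.2))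

theorem contDiff_divDiff {n : ℕ} {φ : ℝ → F} (hφ : ContDiff ℝ (n + 1) φ) :
    ContDiff ℝ n (divDiff φ) := by
  refine contDiff_intervalIntegral.{0, v}
    (g := fun x : (ℝ × ℝ) × ℝ ↦ deriv φ (x.1.2 + x.2 * (x.1.1 - x.1.2))) ?_ 0 1
  exact (contDiff_succ_iff_deriv.1 hφ).2.2.comp (by fun_prop)

theorem divDiff_self [CompleteSpace F] (φ : ℝ → F) (s : ℝ) : divDiff φ (s, s) = deriv φ s := by
  simp [divDiff]

theorem sub_smul_divDiff [CompleteSpace F] {φ : ℝ → F} (hφ : ContDiff ℝ 1 φ) (s t : ℝ) :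
    (s - t) • divDiff φ (s, t) = φ s - φ t := by
  have hderiv := hφ.continuous_deriv le_rfl
  have := intervalIntegral.integral_unitInterval_deriv_eq_sub (z₀ := t) (z₁ := s - t)
    (f := φ) (f' := deriv φ) (by fun_prop)
    fun θ _ ↦ (hφ.differentiable one_ne_zero _).hasDerivAt
  simpa [divDiff] using this

end DividedDifference

theorem sin_pi_mul_div_eq_zero_iff {L u : ℝ} (hL : L ≠ 0) :
    sin (π * u / L) = 0 ↔ ∃ m : ℤ, u = m * L := by
  rw [Real.sin_eq_zero_iff]
  refine exists_congr fun m ↦ ?_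
  rw [eq_div_iff hL, mul_comm π u, mul_right_comm, mul_left_inj' pi_ne_zero, eq_comm]

theorem exists_abs_sub_intCast_mul_lt {L : ℝ} (hL : 0 < L) (u : ℝ) :
    ∃ m : ℤ, |u - m * L| < L := by
  refine ⟨round (u / L), ?_⟩
  have := mul_le_mul_of_nonneg_right (abs_sub_round (u / L)) hL.le
  rw [← abs_of_pos hL, ← abs_mul, sub_mul, abs_of_pos hL, div_mul_cancel₀ _ hL.ne'] at this
  linarith

section ChordQuotient

variable {F : Type*} [NormedAddCommGroup F] [NormedSpace ℝ F] {L : ℝ} {φ : ℝ → F}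

/-- The quotient of `φ s - φ t` by the chord `sin (π (s - t) / L)` of the circle, extended by
its limit to the zeros of the chord. It desingularizes differences of `L`-periodic functions. -/
noncomputable def chordQuot (L : ℝ) (φ : ℝ → F) (p : ℝ × ℝ) : F :=
  if sin (π * (p.1 - p.2) / L) = 0 then (π / L * cos (π * (p.1 - p.2) / L))⁻¹ • deriv φ p.1
  else (sin (π * (p.1 - p.2) / L))⁻¹ • (φ p.1 - φ p.2)

theorem periodic_deriv (hφ : Periodic φ L) : Periodic (deriv φ) L := fun s ↦ by
  rw [← deriv_comp_add_const, hφ.funext]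

theorem chordQuot_antiperiodic_fst (hL : L ≠ 0) (hφ : Periodic φ L) :
    Antiperiodic (chordQuot L φ) (L, 0) := fun p ↦ by
  have harg : π * (p.1 + L - p.2) / L = π * (p.1 - p.2) / L + π := by field_simp; ring
  simp only [chordQuot, Prod.fst_add, Prod.snd_add, add_zero, harg, sin_add_pi, cos_add_pi,
    neg_eq_zero, periodic_deriv hφ p.1, hφ p.1]
  split_ifs <;> simp [inv_neg]

theorem chordQuot_antiperiodic_snd (hL : L ≠ 0) (hφ : Periodic φ L) :
    Antiperiodic (chordQuot L φ) (0, L) := fun p ↦ by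
  have harg : π * (p.1 - (p.2 + L)) / L = π * (p.1 - p.2) / L - π := by field_simp; ring
  simp only [chordQuot, Prod.fst_add, Prod.snd_add, add_zero, harg, sin_sub_pi, cos_sub_pi,
    neg_eq_zero, hφ p.2]
  split_ifs <;> simp [inv_neg]

theorem sin_smul_chordQuot (hL : L ≠ 0) (hφ : Periodic φ L) (p : ℝ × ℝ) :
    sin (π * (p.1 - p.2) / L) • chordQuot L φ p = φ p.1 - φ p.2 := by
  rw [chordQuot]
  split_ifs with hsin
  · obtain ⟨m, hm⟩ := (sin_pi_mul_div_eq_zero_iff hL).1 hsin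
    rw [hsin, zero_smul, sub_eq_iff_eq_add.1 hm, add_comm, hφ.int_mul m, sub_self]
  · exact smul_inv_smul₀ hsin _

theorem contDiff_sin_pi_mul_div (L : ℝ) {n : WithTop ℕ∞} : ContDiff ℝ n fun u ↦ sin (π * u / L) :=
  contDiff_sin.comp (by fun_prop)

theorem hasDerivAt_sin_pi_mul_div (L u : ℝ) :
    HasDerivAt (fun u ↦ sin (π * u / L)) (π / L * cos (π * u / L)) u := by
  have := (((hasDerivAt_id u).const_mul π).div_const L).sin
  simpa [mul_comm] using this

theorem divDiff_sin_ne_zero (hL : L ≠ 0) {u : ℝ} (hu : |u| < |L|) :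
    divDiff (fun u ↦ sin (π * u / L)) (u, 0) ≠ 0 := by
  rcases eq_or_ne u 0 with rfl | hu0
  · rw [divDiff_self, (hasDerivAt_sin_pi_mul_div L 0).deriv]
    simp [hL, pi_ne_zero]
  · have hsin : sin (π * u / L) ≠ 0 := fun h ↦ by
      obtain ⟨m, rfl⟩ := (sin_pi_mul_div_eq_zero_iff hL).1 h
      rw [abs_mul, mul_lt_iff_lt_one_left (abs_pos.2 hL)] at hu
      have : m = 0 := Int.abs_lt_one_iff.1 (by exact_mod_cast hu)
      simp [this] at hu0
    have := sub_smul_divDiff (contDiff_sin_pi_mul_div L) u 0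
    intro h
    simp [h, hsin.symm] at this

theorem chordQuot_eq_divDiff [CompleteSpace F] (hL : L ≠ 0) (hφ : ContDiff ℝ 1 φ) {p : ℝ × ℝ}
    (hp : |p.1 - p.2| < |L|) :
    chordQuot L φ p = (divDiff (fun u ↦ sin (π * u / L)) (p.1 - p.2, 0))⁻¹ • divDiff φ p := by
  obtain ⟨s, t⟩ := p
  have hdd := divDiff_sin_ne_zero hL hp
  rw [eq_inv_smul_iff₀ hdd]
  have hsin := sub_smul_divDiff (contDiff_sin_pi_mul_div L) (s - t) 0
  have hφst := sub_smul_divDiff hφ s t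
  simp only [sub_zero, mul_zero, zero_div, sin_zero, smul_eq_mul] at hsin
  rcases eq_or_ne s t with rfl | hst
  · simp only [sub_self, chordQuot, mul_zero, zero_div, sin_zero, cos_zero, if_true, mul_one,
      divDiff_self, (hasDerivAt_sin_pi_mul_div L 0).deriv]
    exact smul_inv_smul₀ (div_ne_zero pi_ne_zero hL) _
  · have hst' := sub_ne_zero.2 hst
    rw [chordQuot, if_neg (hsin ▸ mul_ne_zero hst' hdd)]
    simp only [← hsin, ← hφst, smul_smul]
    rw [mul_inv_rev, mul_assoc, inv_mul_cancel₀ hst', mul_one, mul_inv_cancel₀ hdd, one_smul]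

theorem contDiff_chordQuot [CompleteSpace F] {n : ℕ} (hL : 0 < L) (hφ : ContDiff ℝ (n + 1) φ)
    (hper : Periodic φ L) : ContDiff ℝ n (chordQuot L φ) := by
  refine contDiff_iff_contDiffAt.2 fun p ↦ ?_
  obtain ⟨m, hm⟩ := exists_abs_sub_intCast_mul_lt hL (p.1 - p.2)
  let shift : ℝ × ℝ → ℝ × ℝ := fun p ↦ p - m • (L, 0)
  have hshift : ContDiff ℝ n shift := by fun_prop
  have hreg : ContDiffAt ℝ n (fun p ↦ (divDiff (fun u ↦ sin (π * u / L)) (p.1 - p.2, 0))⁻¹ •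
      divDiff φ p) (shift p) := by
    refine ContDiffAt.smul (ContDiffAt.inv ?_ ?_) (contDiff_divDiff hφ).contDiffAt
    · exact (contDiff_divDiff (contDiff_sin_pi_mul_div L)).comp
        (f := fun p : ℝ × ℝ ↦ (p.1 - p.2, (0 : ℝ))) (by fun_prop) |>.contDiffAt
    · exact divDiff_sin_ne_zero hL.ne' (by simpa [shift, sub_right_comm, abs_of_pos hL] using hm)
  have hnear : ∀ᶠ q in 𝓝 (shift p), |q.1 - q.2| < |L| :=
    (by fun_prop : Continuous fun q : ℝ × ℝ ↦ |q.1 - q.2|).continuousAt.eventually_lt_const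
      (by simpa [shift, sub_right_comm, abs_of_pos hL] using hm)
  have hφ1 : ContDiff ℝ 1 φ := hφ.of_le (by simp)
  have hquot : ContDiffAt ℝ n (chordQuot L φ) (shift p) :=
    hreg.congr_of_eventuallyEq <| hnear.mono fun q hq ↦ chordQuot_eq_divDiff hL.ne' hφ1 hq
  have hanti (q : ℝ × ℝ) : chordQuot L φ q = (m.negOnePow : ℤ) • chordQuot L φ (shift q) := by
    rw [← (chordQuot_antiperiodic_fst hL.ne' hper).add_zsmul_eq, sub_add_cancel]
  exact ((hquot.comp p hshift.contDiffAt).const_smul (m.negOnePow : ℤ)).congr_of_eventuallyEq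
    (.of_forall hanti)

end ChordQuotient

theorem periodic_norm_of_antiperiodic {G F : Type*} [Add G] [SeminormedAddCommGroup F]
    {f : G → F} {c : G} (hf : Antiperiodic f c) : Periodic (fun x ↦ ‖f x‖) c := fun x ↦ by
  simp [hf x]

section DoublyPeriodic

variable {α : Type*} {L : ℝ} {f : ℝ × ℝ → α}

theorem range_eq_image_of_periodic (hL : 0 < L) (h₁ : Periodic f (L, 0))
    (h₂ : Periodic f (0, L)) : range f = f '' (Icc 0 L ×ˢ Icc 0 L) := by
  refine Subset.antisymm ?_ (image_subset_range f _)
  rintro _ ⟨⟨s, t⟩, rfl⟩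
  refine ⟨(toIcoMod hL 0 s, toIcoMod hL 0 t), ⟨?_, ?_⟩, ?_⟩
  · simpa using Ico_subset_Icc_self (toIcoMod_mem_Ico hL 0 s)
  · simpa using Ico_subset_Icc_self (toIcoMod_mem_Ico hL 0 t)
  · have : ((toIcoMod hL 0 s, toIcoMod hL 0 t) : ℝ × ℝ)
        = (s, t) - toIcoDiv hL 0 s • (L, 0) - toIcoDiv hL 0 t • (0, L) := by
      ext <;> simp [-smul_eq_mul, -zsmul_eq_mul]
    rw [this, h₂.sub_zsmul_eq, h₁.sub_zsmul_eq]

theorem isCompact_range_of_periodic [TopologicalSpace α] (hL : 0 < L) (hf : Continuous f)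
    (h₁ : Periodic f (L, 0)) (h₂ : Periodic f (0, L)) : IsCompact (range f) := by
  rw [range_eq_image_of_periodic hL h₁ h₂]
  exact (isCompact_Icc.prod isCompact_Icc).image hf

theorem exists_lipschitzWith_of_periodic {F : Type*} [NormedAddCommGroup F] [NormedSpace ℝ F]
    {f : ℝ × ℝ → F} (hL : 0 < L) (hf : ContDiff ℝ 1 f) (h₁ : Periodic f (L, 0))
    (h₂ : Periodic f (0, L)) : ∃ K, LipschitzWith K f := by
  have hperiodic {c : ℝ × ℝ} (hc : Periodic f c) : Periodic (fderiv ℝ f) c := fun p ↦ by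
    rw [← fderiv_comp_add_right, hc.funext]
  obtain ⟨C, hC⟩ := (isCompact_range_of_periodic hL (hf.continuous_fderiv one_ne_zero)
    (hperiodic h₁) (hperiodic h₂)).isBounded.exists_norm_le
  exact ⟨C.toNNReal, lipschitzWith_of_nnnorm_fderiv_le (hf.differentiable one_ne_zero) fun p ↦
    NNReal.le_toNNReal_of_coe_le (hC _ ⟨p, rfl⟩)⟩

end DoublyPeriodic

/-- `l` is an `L`-periodic regular parametrization of a simple closed curve. -/
structure IsSimpleClosedCurve {F : Type*} [NormedAddCommGroup F] [NormedSpace ℝ F]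
    (L : ℝ) (l : ℝ → F) : Prop where
  pos : 0 < L
  periodic : Periodic l L
  deriv_ne_zero : ∀ s, deriv l s ≠ 0
  injOn : InjOn l (Ico 0 L)

namespace IsSimpleClosedCurve

variable {F : Type*} [NormedAddCommGroup F] [NormedSpace ℝ F] {L : ℝ} {l : ℝ → F}

theorem apply_eq_apply_iff (hl : IsSimpleClosedCurve L l) {s t : ℝ} :
    l s = l t ↔ sin (π * (s - t) / L) = 0 := by
  have hmod (s : ℝ) : l (toIcoMod hl.pos 0 s) = l s := hl.periodic.sub_zsmul_eq _
  have hmem (s : ℝ) : toIcoMod hl.pos 0 s ∈ Ico 0 L := by simpa using toIcoMod_mem_Ico hl.pos 0 s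
  rw [sin_pi_mul_div_eq_zero_iff hl.pos.ne', ← hmod s, ← hmod t, hl.injOn.eq_iff (hmem s) (hmem t),
    eq_comm, toIcoMod_eq_toIcoMod]
  simp

theorem chordQuot_ne_zero (hl : IsSimpleClosedCurve L l) (p : ℝ × ℝ) : chordQuot L l p ≠ 0 := by
  rw [chordQuot]
  split_ifs with hsin
  · have hcos : cos (π * (p.1 - p.2) / L) ≠ 0 := fun h ↦ by
      simpa [hsin, h] using sin_sq_add_cos_sq (π * (p.1 - p.2) / L)
    exact smul_ne_zero (inv_ne_zero <| mul_ne_zero (div_ne_zero pi_ne_zero hl.pos.ne') hcos)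
      (hl.deriv_ne_zero _)
  · exact smul_ne_zero (inv_ne_zero hsin) (sub_ne_zero.2 <| mt hl.apply_eq_apply_iff.1 hsin)

end IsSimpleClosedCurve

/-! ### The tangential kernel -/

section TangentKernel

variable {E : Type*} [NormedAddCommGroup E] [InnerProductSpace ℝ E] {L : ℝ} {l : ℝ → E}

/-- The tangential component at `l s` of the field of a point vortex at `l t`. -/
noncomputable def tangentKernel (l : ℝ → E) (s t : ℝ) : ℝ :=
  inner ℝ (l s - l t) (deriv l s) / ‖l s - l t‖ ^ 2

/-- The regular part of `tangentKernel`, what remains after subtraction of the cotangent: it is the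
derivative in `s` of `log ‖chordQuot L l (s, t)‖`. -/
noncomputable def regularPart (L : ℝ) (l : ℝ → E) (p : ℝ × ℝ) : ℝ :=
  inner ℝ (chordQuot L l p) (fderiv ℝ (chordQuot L l) p (1, 0)) / ‖chordQuot L l p‖ ^ 2

theorem regularPart_periodic {c : ℝ × ℝ} (hc : Antiperiodic (chordQuot L l) c) :
    Periodic (regularPart L l) c := fun p ↦ by
  have hfderiv : fderiv ℝ (chordQuot L l) (p + c) = -fderiv ℝ (chordQuot L l) p := by
    rw [← fderiv_comp_add_right, hc.funext]
    exact fderiv_neg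
  simp [regularPart, hc p, hfderiv]

variable [CompleteSpace E]

theorem IsSimpleClosedCurve.hasDerivAt_chordQuot (hl : IsSimpleClosedCurve L l)
    (hC : ContDiff ℝ 2 l) (s t : ℝ) :
    HasDerivAt (fun s ↦ chordQuot L l (s, t)) (fderiv ℝ (chordQuot L l) (s, t) (1, 0)) s :=
  have hq := (contDiff_chordQuot (n := 1) hl.pos hC hl.periodic).differentiable one_ne_zero (s, t)
  hq.hasFDerivAt.comp_hasDerivAt (f := fun s ↦ (s, t)) s
    ((hasDerivAt_id s).prodMk (hasDerivAt_const s t))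

theorem IsSimpleClosedCurve.hasDerivAt_log_norm_chordQuot (hl : IsSimpleClosedCurve L l)
    (hC : ContDiff ℝ 2 l) (s t : ℝ) :
    HasDerivAt (fun s ↦ Real.log (‖chordQuot L l (s, t)‖ ^ 2) / 2) (regularPart L l (s, t)) s := by
  have hne := pow_ne_zero 2 (norm_ne_zero_iff.2 <| hl.chordQuot_ne_zero (s, t))
  refine (((hl.hasDerivAt_chordQuot hC s t).norm_sq.log hne).div_const 2).congr_deriv ?_
  rw [regularPart]
  ring

theorem IsSimpleClosedCurve.contDiff_regularPart (hl : IsSimpleClosedCurve L l) {n : ℕ}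
    (hC : ContDiff ℝ (n + 2) l) : ContDiff ℝ n (regularPart L l) := by
  have hq : ContDiff ℝ (n + 1 : ℕ) (chordQuot L l) :=
    contDiff_chordQuot hl.pos (by convert hC using 1; push_cast; ring) hl.periodic
  push_cast at hq
  refine ((hq.of_le (by simp)).inner ℝ ?_).div ((hq.of_le (by simp)).norm_sq ℝ) fun p ↦ ?_
  · exact (hq.fderiv_right le_rfl).clm_apply contDiff_const
  · exact pow_ne_zero 2 (norm_ne_zero_iff.2 <| hl.chordQuot_ne_zero p)

theorem IsSimpleClosedCurve.integral_regularPart (hl : IsSimpleClosedCurve L l)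
    (hC : ContDiff ℝ 2 l) (t : ℝ) : ∫ s in (0 : ℝ)..L, regularPart L l (s, t) = 0 := by
  have hcont : Continuous (regularPart L l) :=
    (hl.contDiff_regularPart (n := 0) (by simpa)).continuous
  have hperiodic := periodic_norm_of_antiperiodic
    (chordQuot_antiperiodic_fst hl.pos.ne' hl.periodic) (0, t)
  simp only [Prod.mk_add_mk, zero_add, add_zero] at hperiodic
  rw [intervalIntegral.integral_eq_sub_of_hasDerivAt
    (fun s _ ↦ hl.hasDerivAt_log_norm_chordQuot hC s t)
    (Continuous.intervalIntegrable (by fun_prop) _ _), hperiodic, sub_self]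

theorem IsSimpleClosedCurve.tangentKernel_eq (hl : IsSimpleClosedCurve L l) (hC : ContDiff ℝ 2 l)
    {s t : ℝ} (hst : sin (π * (s - t) / L) ≠ 0) :
    tangentKernel l s t = π / L * cot (π * (s - t) / L) + regularPart L l (s, t) := by
  have hchord (s : ℝ) := sin_smul_chordQuot hl.pos.ne' hl.periodic (s, t)
  have hq := hl.hasDerivAt_chordQuot hC s t
  have hsin : HasDerivAt (fun s ↦ sin (π * (s - t) / L)) (π / L * cos (π * (s - t) / L)) s :=
    (hasDerivAt_sin_pi_mul_div L (s - t)).comp_sub_const s t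
  have hderiv : deriv l s = sin (π * (s - t) / L) • fderiv ℝ (chordQuot L l) (s, t) (1, 0)
      + (π / L * cos (π * (s - t) / L)) • chordQuot L l (s, t) := by
    rw [← (hsin.smul hq).deriv, ← deriv_sub_const (f := l) (l t)]
    exact congrArg (deriv · s) (funext fun s ↦ (hchord s).symm)
  have hne := norm_ne_zero_iff.2 <| hl.chordQuot_ne_zero (s, t)
  rw [tangentKernel, ← hchord s, hderiv, regularPart, cot_eq_cos_div_sin, inner_add_right]
  simp only [real_inner_smul_left, real_inner_smul_right, norm_smul, real_inner_self_eq_norm_sq,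
    mul_pow, norm_eq_abs, sq_abs]
  field_simp
  ring

theorem IsSimpleClosedCurve.exists_continuous_eq_sub_mul_tangentKernel
    (hl : IsSimpleClosedCurve L l) (hC : ContDiff ℝ 1 l) {φ : ℝ → ℝ} (hφ : ContDiff ℝ 1 φ)
    (hφL : Periodic φ L) :
    ∃ m : ℝ × ℝ → ℝ, Continuous m ∧ ∀ s t, sin (π * (s - t) / L) ≠ 0 →
      m (s, t) = (φ s - φ t) * tangentKernel l s t := by
  have hql := (contDiff_chordQuot (n := 0) hl.pos (by simpa using hC) hl.periodic).continuous
  have hqφ := (contDiff_chordQuot (n := 0) hl.pos (by simpa using hφ) hφL).continuous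
  have hne (p : ℝ × ℝ) := norm_ne_zero_iff.2 <| hl.chordQuot_ne_zero p
  have hl' := hC.continuous_deriv le_rfl
  refine ⟨fun p ↦ chordQuot L φ p * inner ℝ (chordQuot L l p) (deriv l p.1) /
    ‖chordQuot L l p‖ ^ 2, ?_, fun s t hst ↦ ?_⟩
  · exact Continuous.div (by fun_prop) (by fun_prop) fun p ↦ pow_ne_zero 2 (hne p)
  · have hst' := hne (s, t)
    rw [tangentKernel, ← sin_smul_chordQuot hl.pos.ne' hl.periodic (s, t),
      ← sin_smul_chordQuot hl.pos.ne' hφL (s, t)]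
    simp only [real_inner_smul_left, norm_smul, mul_pow, norm_eq_abs, sq_abs, smul_eq_mul]
    field_simp

end TangentKernel

/-! ### The discrete Hilbert transform -/

section NormalizedNorm

variable {N : ℕ}

theorem l2norm_eq_norm_toLp (z : Fin N → ℝ) : l2norm z = (√N)⁻¹ * ‖WithLp.toLp 2 z‖ := by
  rw [l2norm, EuclideanSpace.norm_eq, Real.sqrt_mul (by positivity), Real.sqrt_inv]
  simp

theorem l2norm_nonneg (z : Fin N → ℝ) : 0 ≤ l2norm z := Real.sqrt_nonneg _

theorem l2norm_sq (z : Fin N → ℝ) : l2norm z ^ 2 = (N : ℝ)⁻¹ * ∑ i, z i ^ 2 :=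
  Real.sq_sqrt (by positivity)

theorem l2norm_sub_le (x y : Fin N → ℝ) : l2norm (x - y) ≤ l2norm x + l2norm y := by
  simp only [l2norm_eq_norm_toLp, WithLp.toLp_sub, ← mul_add]
  gcongr
  exact norm_sub_le _ _

theorem l2norm_smul (c : ℝ) (x : Fin N → ℝ) : l2norm (c • x) = |c| * l2norm x := by
  simp only [l2norm_eq_norm_toLp, WithLp.toLp_smul, norm_smul, norm_eq_abs]
  ring

theorem abs_avg_mul_le (x y : Fin N → ℝ) : |avg (x * y)| ≤ l2norm x * l2norm y := by
  have hinner : inner ℝ (WithLp.toLp 2 y) (WithLp.toLp 2 x) = ∑ i, x i * y i := by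
    simp [PiLp.inner_apply]
  have hN : ((√N)⁻¹ * (√N)⁻¹ : ℝ) = (N : ℝ)⁻¹ := by
    rw [← mul_inv, Real.mul_self_sqrt (Nat.cast_nonneg N)]
  simp only [l2norm_eq_norm_toLp, mul_mul_mul_comm (√N)⁻¹, hN, avg, Pi.mul_apply, abs_mul, abs_inv,
    Nat.abs_cast, ← hinner]
  gcongr
  rw [mul_comm]
  exact abs_real_inner_le_norm _ _

theorem l2norm_mono {x y : Fin N → ℝ} (h : ∀ i, |x i| ≤ |y i|) : l2norm x ≤ l2norm y :=
  Real.sqrt_le_sqrt (by gcongr _ * ∑ i, ?_ with i; exact sq_le_sq.2 (h i))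

theorem l2norm_const_le (c : ℝ) : l2norm (fun _ : Fin N ↦ c) ≤ |c| := by
  rcases eq_or_ne N 0 with rfl | hN
  · simp [l2norm]
  · simp [l2norm, hN, Real.sqrt_sq_eq_abs]

theorem l2norm_le_of_abs_le {x : Fin N → ℝ} {c : ℝ} (hc : 0 ≤ c) (h : ∀ i, |x i| ≤ c) :
    l2norm x ≤ c :=
  (l2norm_mono fun i ↦ (h i).trans (le_abs_self c)).trans <|
    (l2norm_const_le c).trans (abs_of_nonneg hc).le

end NormalizedNorm

section DiscreteHilbert

open Matrix

theorem two_mul_abs_sub_round_le_abs_sin (x : ℝ) : 2 * |x - round x| ≤ |sin (π * x)| := by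
  have hshift : π * x = π * (x - round x) + round x * π := by ring
  have hsmall : |π * (x - round x)| ≤ π / 2 := by
    rw [abs_mul, abs_of_pos pi_pos]
    nlinarith [abs_sub_round x, pi_pos]
  have := mul_abs_le_abs_sin hsmall
  rw [hshift, sin_add_int_mul_pi, abs_mul, abs_neg_one_zpow, one_mul]
  convert this using 1
  rw [abs_mul, abs_of_pos pi_pos]
  field_simp

/-- The samples of the cotangent on the grid of step `π / N` shifted by half a step. -/
noncomputable def halfCot (N : ℕ) (m : ℤ) : ℝ := cot (π * ((m + 1 / 2) / N))

variable {N : ℕ}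

theorem one_div_le_abs_sin_half (hN : N ≠ 0) (m : ℤ) : 1 / N ≤ |sin (π * ((m + 1 / 2) / N))| := by
  set r := round (((m : ℝ) + 1 / 2) / N)
  have hodd : 1 ≤ |(2 * m + 1 - 2 * r * N : ℝ)| := by
    have : 1 ≤ |2 * m + 1 - 2 * r * N| := Int.one_le_abs fun h ↦ by
      have : (2 : ℤ) ∣ 1 := ⟨r * N - m, by linarith⟩
      omega
    exact_mod_cast this
  have hdist : (2 * m + 1 - 2 * r * N) / N = 2 * (((m : ℝ) + 1 / 2) / N - r) := by
    field_simp
  calc 1 / (N : ℝ) ≤ |(2 * m + 1 - 2 * r * N : ℝ)| / N := by gcongr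
    _ = |2 * (((m : ℝ) + 1 / 2) / N - r)| := by rw [← hdist, abs_div, Nat.abs_cast]
    _ = 2 * |((m : ℝ) + 1 / 2) / N - r| := by rw [abs_mul, abs_two]
    _ ≤ _ := two_mul_abs_sub_round_le_abs_sin _

theorem sin_half_ne_zero (hN : N ≠ 0) (m : ℤ) : sin (π * ((m + 1 / 2) / N)) ≠ 0 :=
  abs_pos.1 <| (by positivity : (0 : ℝ) < 1 / N).trans_le (one_div_le_abs_sin_half hN m)

theorem halfCot_periodic (N : ℕ) : Periodic (halfCot N) N := fun m ↦ by
  rcases eq_or_ne N 0 with rfl | hN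
  · simp
  have : π * (((m + N : ℤ) + 1 / 2) / N) = π * ((m + 1 / 2) / N) + π := by
    push_cast; field_simp; ring
  rw [halfCot, this, cot_eq_cos_div_sin, cos_add_pi, sin_add_pi, neg_div_neg_eq,
    ← cot_eq_cos_div_sin, halfCot]

theorem halfCot_neg_sub_one (N : ℕ) (m : ℤ) : halfCot N (-1 - m) = -halfCot N m := by
  have : π * (((-1 - m : ℤ) + 1 / 2) / N) = -(π * ((m + 1 / 2) / N)) := by push_cast; ring
  rw [halfCot, this, cot_eq_cos_div_sin, cos_neg, sin_neg, div_neg, ← cot_eq_cos_div_sin, halfCot]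

theorem sum_range_periodic {α : Type*} [AddCommGroup α] {f : ℤ → α} (hf : Periodic f N) (k : ℤ) :
    ∑ i ∈ Finset.range N, f (i + k) = ∑ i ∈ Finset.range N, f i := by
  have hstep : Periodic (fun k : ℤ ↦ ∑ i ∈ Finset.range N, f (i + k)) 1 := fun k ↦ by
    have := Finset.sum_range_sub (fun i : ℕ ↦ f (i + k)) N
    simp only [Finset.sum_sub_distrib, Nat.cast_add_one, Nat.cast_zero, zero_add, add_comm (N : ℤ),
      hf k, sub_self, sub_eq_zero] at this
    simpa only [add_assoc, add_comm (1 : ℤ)] using this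
  simpa using (hstep.int_mul k).eq

theorem sum_halfCot_add (k : ℤ) : ∑ i : Fin N, halfCot N (i + k) = 0 := by
  rw [Fin.sum_univ_eq_sum_range (fun i ↦ halfCot N (i + k)),
    sum_range_periodic (halfCot_periodic N), ← self_eq_neg, ← Finset.sum_neg_distrib]
  conv_lhs => rw [← Finset.sum_range_reflect]
  refine Finset.sum_congr rfl fun i hi ↦ ?_
  have := Finset.mem_range.1 hi
  rw [← halfCot_neg_sub_one, ← halfCot_periodic N (-1 - i)]
  congr 1
  omega

theorem cot_mul_cot {a b : ℝ} (ha : sin a ≠ 0) (hb : sin b ≠ 0) (hab : sin (a - b) ≠ 0) :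
    cot a * cot b = cot (a - b) * (cot b - cot a) - 1 := by
  rw [sin_sub] at hab
  simp only [cot_eq_cos_div_sin, cos_sub, sin_sub]
  field_simp
  ring

/-- The discrete Hilbert transform between a uniform periodic grid and the grid shifted by half a
step: the kernel is the cotangent sampled midway between its poles. -/
noncomputable def discreteHilbert (N : ℕ) : Matrix (Fin N) (Fin N) ℝ :=
  of fun i j ↦ (N : ℝ)⁻¹ * halfCot N (i - j)

theorem one_vecMul_discreteHilbert : 1 ᵥ* discreteHilbert N = 0 := by
  ext j
  have := sum_halfCot_add (N := N) (-j)
  simp_all [discreteHilbert, vecMul, dotProduct, ← Finset.mul_sum, sub_eq_add_neg]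

theorem discreteHilbert_mulVec_one : discreteHilbert N *ᵥ 1 = 0 := by
  ext i
  have hflip (j : Fin N) : halfCot N (i - j) = -halfCot N (j + (-1 - i)) := by
    rw [← halfCot_neg_sub_one]
    congr 1
    ring
  simp [discreteHilbert, mulVec, dotProduct, ← Finset.mul_sum, hflip, sum_halfCot_add]

theorem transpose_mul_discreteHilbert_apply_of_ne {j k : Fin N} (hjk : j ≠ k) :
    ((discreteHilbert N)ᵀ * discreteHilbert N) j k = -(N : ℝ)⁻¹ := by
  have hN : N ≠ 0 := (Fin.pos j).ne'
  have hsin : sin (π * ((k - j : ℝ) / N)) ≠ 0 := fun h ↦ by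
    rw [← mul_div_assoc] at h
    obtain ⟨m, hm⟩ := (sin_pi_mul_div_eq_zero_iff (Nat.cast_ne_zero.2 hN)).1 h
    have hm' : (k : ℤ) - j = m * N := by exact_mod_cast hm
    have := Int.eq_zero_of_abs_lt_dvd (Dvd.intro_left m hm'.symm) (abs_lt.2 ⟨by omega, by omega⟩)
    omega
  have hprod (i : Fin N) : halfCot N (i - j) * halfCot N (i - k) =
      cot (π * ((k - j : ℝ) / N)) * (halfCot N (i - k) - halfCot N (i - j)) - 1 := by
    have harg : π * ((k - j : ℝ) / N) = π * (((i - j : ℤ) + 1 / 2) / N)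
        - π * (((i - k : ℤ) + 1 / 2) / N) := by push_cast; ring
    rw [harg] at hsin ⊢
    exact cot_mul_cot (sin_half_ne_zero hN _) (sin_half_ne_zero hN _) hsin
  have hcol (j : Fin N) : ∑ i : Fin N, halfCot N (i - j) = 0 := by
    simpa [sub_eq_add_neg] using sum_halfCot_add (N := N) (-j)
  calc ((discreteHilbert N)ᵀ * discreteHilbert N) j k
      = (N : ℝ)⁻¹ * (N : ℝ)⁻¹ * ∑ i : Fin N, halfCot N (i - j) * halfCot N (i - k) := by
        simp only [mul_apply, transpose_apply, discreteHilbert, of_apply, Finset.mul_sum]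
        exact Finset.sum_congr rfl fun i _ ↦ mul_mul_mul_comm ..
    _ = -(N : ℝ)⁻¹ := by
        simp only [hprod, Finset.sum_sub_distrib, ← Finset.mul_sum, hcol]
        simp [hN]

theorem transpose_mul_discreteHilbert :
    (discreteHilbert N)ᵀ * discreteHilbert N = 1 - (N : ℝ)⁻¹ • of fun _ _ ↦ 1 := by
  ext j k
  rcases eq_or_ne j k with rfl | hjk
  · have hrow : ∑ k, ((discreteHilbert N)ᵀ * discreteHilbert N) j k = 0 := by
      have : ((discreteHilbert N)ᵀ * discreteHilbert N) *ᵥ 1 = 0 := by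
        rw [← mulVec_mulVec, discreteHilbert_mulVec_one, mulVec_zero]
      simpa [mulVec, dotProduct] using congrFun this j
    rw [← Finset.add_sum_erase _ _ (Finset.mem_univ j), Finset.sum_congr rfl fun k hk ↦
      transpose_mul_discreteHilbert_apply_of_ne (Finset.ne_of_mem_erase hk).symm] at hrow
    have hN : 1 ≤ N := Fin.pos j
    simp [Nat.cast_sub hN] at hrow
    simp
    field_simp at hrow ⊢
    linarith
  · simp [transpose_mul_discreteHilbert_apply_of_ne hjk, hjk]

theorem l2norm_sq_discreteHilbert_mulVec (z : Fin N → ℝ) :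
    l2norm (discreteHilbert N *ᵥ z) ^ 2 = l2norm z ^ 2 - avg z ^ 2 := by
  have hdot (x : Fin N → ℝ) : ∑ i, x i ^ 2 = x ⬝ᵥ x := by simp [dotProduct, sq]
  have hones : (of fun _ _ ↦ (1 : ℝ)) *ᵥ z = fun _ : Fin N ↦ ∑ i, z i := by
    ext i
    simp [mulVec, dotProduct]
  rw [l2norm_sq, l2norm_sq, hdot, hdot, dotProduct_mulVec, ← mulVec_transpose, mulVec_mulVec,
    transpose_mul_discreteHilbert, sub_mulVec, one_mulVec, smul_mulVec, hones, sub_dotProduct,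
    smul_dotProduct, avg]
  simp [dotProduct, ← Finset.mul_sum]
  ring

theorem l2norm_le_abs_avg_add_discreteHilbert (z : Fin N → ℝ) :
    l2norm z ≤ |avg z| + l2norm (discreteHilbert N *ᵥ z) := by
  have hH := l2norm_nonneg (discreteHilbert N *ᵥ z)
  refine le_of_sq_le_sq ?_ (by positivity)
  nlinarith [l2norm_sq_discreteHilbert_mulVec z, sq_abs (avg z), mul_nonneg (abs_nonneg (avg z)) hH]

end DiscreteHilbert

/-! ### Nearly uniform meshes and the vortex matrix -/

section Mesh

/-- A sequence of meshes of `[0, L]` whose `N`-th member has its `i`-th node within `O(N⁻³)` of the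
uniform node `(i + θ) L / N`; vortices sit at `θ = 0` and control points at `θ = 1 / 2`. -/
def IsNearlyUniformMesh (L θ : ℝ) (x : (N : ℕ) → Fin N → ℝ) : Prop :=
  ∃ M, ∀ᶠ N : ℕ in atTop, ∀ i, |x N i - (i + θ) * L / N| ≤ M / (N : ℝ) ^ 3

variable {L θ : ℝ} {x : (N : ℕ) → Fin N → ℝ}

theorem IsNearlyUniformMesh.exists_abs_sub_le (hx : IsNearlyUniformMesh L θ x) (hL : 0 < L) :
    ∃ D, ∀ᶠ N : ℕ in atTop, ∀ i : Fin N, ∀ s ∈ Icc (i * (L / N)) ((i + 1) * (L / N)),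
      |x N i - s| ≤ D / N := by
  obtain ⟨M, hM⟩ := hx
  refine ⟨|M| + (|θ| + 1) * L, ?_⟩
  filter_upwards [hM, eventually_ge_atTop 1] with N hN hN1 i s hs
  have hN1 : (1 : ℝ) ≤ N := by exact_mod_cast hN1
  have hcube : M / (N : ℝ) ^ 3 ≤ |M| / N := by
    gcongr
    · exact le_abs_self M
    · exact le_self_pow₀ hN1 (by norm_num)
  have hcell : |(i + θ) * L / N - s| ≤ (|θ| + 1) * L / N := by
    have hi : |i * (L / N) - s| ≤ L / N := abs_le.2 ⟨by linarith [hs.2], by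
      have : 0 ≤ L / N := by positivity
      linarith [hs.1]⟩
    calc |(i + θ) * L / N - s| = |θ * (L / N) + (i * (L / N) - s)| := by ring_nf
      _ ≤ |θ| * (L / N) + L / N := by
        refine (abs_add_le _ _).trans (add_le_add (le_of_eq ?_) hi)
        rw [abs_mul, abs_of_pos (by positivity : 0 < L / N)]
      _ = _ := by ring
  calc |x N i - s| ≤ |x N i - (i + θ) * L / N| + |(i + θ) * L / N - s| := abs_sub_le _ _ _
    _ ≤ |M| / N + (|θ| + 1) * L / N := add_le_add ((hN i).trans hcube) hcell
    _ = _ := by ring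

theorem Icc_cell_subset (hL : 0 ≤ L) {N : ℕ} (i : Fin N) :
    Icc (i * (L / N)) ((i + 1) * (L / N)) ⊆ Icc 0 L := by
  have hi : ((i : ℕ) : ℝ) + 1 ≤ N := by exact_mod_cast i.2
  have hN : (N : ℝ) ≠ 0 := by exact_mod_cast (Fin.pos i).ne'
  refine Icc_subset_Icc (by positivity) ?_
  calc ((i : ℕ) + 1 : ℝ) * (L / N) ≤ N * (L / N) := by gcongr
    _ = L := mul_div_cancel₀ L hN

theorem IsNearlyUniformMesh.eventually_mem_Icc (hx : IsNearlyUniformMesh L θ x) (hL : 0 < L) :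
    ∀ᶠ N in atTop, ∀ i, x N i ∈ Icc (-1) (L + 1) := by
  obtain ⟨D, hD⟩ := hx.exists_abs_sub_le hL
  filter_upwards [hD, (tendsto_const_div_atTop_nhds_zero_nat D).eventually_le_const one_pos]
    with N hN hN1 i
  have hcell : i * (L / N) ∈ Icc (i * (L / N)) ((i + 1) * (L / N)) :=
    left_mem_Icc.2 (by gcongr; simp)
  have h0L := Icc_cell_subset hL.le i hcell
  have := abs_le.1 ((hN i _ hcell).trans hN1)
  exact ⟨by linarith [h0L.1], by linarith [h0L.2]⟩

theorem abs_riemannSum_sub_integral_le {N : ℕ} (hL : 0 < L) (hN : N ≠ 0) {f : ℝ → ℝ}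
    (hf : Continuous f) {x : Fin N → ℝ} {ε : ℝ}
    (hε : ∀ i : Fin N, ∀ s ∈ Icc (i * (L / N)) ((i + 1) * (L / N)), |f (x i) - f s| ≤ ε) :
    |L / N * ∑ i, f (x i) - ∫ s in 0..L, f s| ≤ L * ε := by
  have hN' : (N : ℝ) ≠ 0 := Nat.cast_ne_zero.2 hN
  have hcells : ∫ s in 0..L, f s =
      ∑ i : Fin N, ∫ s in i * (L / N)..(i + 1) * (L / N), f s := by
    have := intervalIntegral.sum_integral_adjacent_intervals (f := f) (μ := volume)
      (a := fun k : ℕ ↦ k * (L / N)) (n := N) fun k _ ↦ hf.intervalIntegrable _ _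
    simp only [Nat.cast_zero, zero_mul, mul_div_cancel₀ L hN', Nat.cast_add_one] at this
    rw [← this, ← Fin.sum_univ_eq_sum_range
      fun k ↦ ∫ s in (k : ℝ) * (L / N)..((k : ℝ) + 1) * (L / N), f s]
  have hcell (i : Fin N) :
      |L / N * f (x i) - ∫ s in i * (L / N)..(i + 1) * (L / N), f s| ≤ L / N * ε := by
    have hlen : ((i : ℕ) + 1 : ℝ) * (L / N) - i * (L / N) = L / N := by ring
    have hle : (i : ℕ) * (L / N) ≤ ((i : ℕ) + 1 : ℝ) * (L / N) := by gcongr; simp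
    have hconst : L / N * f (x i) = ∫ _ in i * (L / N)..(i + 1) * (L / N), f (x i) := by
      rw [intervalIntegral.integral_const, hlen, smul_eq_mul]
    rw [hconst, ← intervalIntegral.integral_sub (by simp) (hf.intervalIntegrable _ _)]
    refine (intervalIntegral.norm_integral_le_of_norm_le_const (E := ℝ) (C := ε)
      fun _ hs ↦ ?_).trans_eq ?_
    · rw [uIoc_of_le hle] at hs
      exact hε i _ ⟨hs.1.le, hs.2⟩
    · rw [hlen, abs_of_pos (by positivity), mul_comm]
  calc |L / N * ∑ i, f (x i) - ∫ s in 0..L, f s|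
      = |∑ i, (L / N * f (x i) - ∫ s in i * (L / N)..(i + 1) * (L / N), f s)| := by
        rw [hcells, Finset.mul_sum, Finset.sum_sub_distrib]
    _ ≤ ∑ _i : Fin N, L / N * ε :=
        (Finset.abs_sum_le_sum_abs _ _).trans (Finset.sum_le_sum fun i _ ↦ hcell i)
    _ = L * ε := by simp; field_simp

theorem IsNearlyUniformMesh.exists_abs_riemannSum_sub_integral_le
    (hx : IsNearlyUniformMesh L θ x) (hL : 0 < L) {T : Type*} {F : T → ℝ → ℝ} {K : NNReal}
    (hF : ∀ t, LipschitzWith K (F t)) :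
    ∃ C, ∀ᶠ N : ℕ in atTop, ∀ t, |L / N * ∑ i, F t (x N i) - ∫ s in 0..L, F t s| ≤ C / N := by
  obtain ⟨D, hD⟩ := hx.exists_abs_sub_le hL
  refine ⟨L * (K * D), ?_⟩
  filter_upwards [hD, eventually_ne_atTop 0] with N hN hN0 t
  rw [mul_div_assoc]
  refine abs_riemannSum_sub_integral_le hL hN0 (hF t).continuous fun i s hs ↦ ?_
  rw [mul_div_assoc]
  exact ((hF t).dist_le_mul _ _).trans (by gcongr; exact hN i s hs)

theorem IsNearlyUniformMesh.tendstoUniformlyOn_riemannSum (hx : IsNearlyUniformMesh L θ x)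
    (hL : 0 < L) {T : Type*} [PseudoMetricSpace T] {F : T → ℝ → ℝ} (hF : Continuous (uncurry F))
    {S : Set T} (hS : IsCompact S) :
    TendstoUniformlyOn (fun N t ↦ L / N * ∑ i, F t (x N i)) (fun t ↦ ∫ s in 0..L, F t s)
      atTop S := by
  obtain ⟨D, hD⟩ := hx.exists_abs_sub_le hL
  have hunif := (hS.prod (isCompact_Icc (a := (-1 : ℝ)) (b := L + 1))
    ).uniformContinuousOn_of_continuous hF.continuousOn
  rw [Metric.uniformContinuousOn_iff_le] at hunif
  refine Metric.tendstoUniformlyOn_iff.2 fun ε hε ↦ ?_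
  obtain ⟨δ, hδ, hFδ⟩ := hunif (ε / (2 * L)) (by positivity)
  filter_upwards [hD, hx.eventually_mem_Icc hL, eventually_ne_atTop 0,
    (tendsto_const_div_atTop_nhds_zero_nat D).eventually_le_const hδ] with N hN hmem hN0 hND t ht
  rw [dist_comm, Real.dist_eq]
  have := abs_riemannSum_sub_integral_le hL hN0 (hF.uncurry_left t) (x := x N)
    (ε := ε / (2 * L)) fun i s hs ↦ ?_
  · refine this.trans_lt ?_
    field_simp
    linarith
  · have h0L := Icc_cell_subset hL.le i hs
    refine hFδ (t, x N i) ⟨ht, hmem i⟩ (t, s) ⟨ht, ⟨by linarith [h0L.1], by linarith [h0L.2]⟩⟩ ?_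
    simpa [Prod.dist_eq, Real.dist_eq, hδ.le] using (hN i s hs).trans hND

theorem IsNearlyUniformMesh.tendsto_riemannSum (hx : IsNearlyUniformMesh L θ x) (hL : 0 < L)
    {f : ℝ → ℝ} (hf : Continuous f) :
    Tendsto (fun N : ℕ ↦ L / N * ∑ i, f (x N i)) atTop (𝓝 (∫ s in 0..L, f s)) := by
  have := hx.tendstoUniformlyOn_riemannSum hL (F := fun _ : Unit ↦ f)
    (hf.comp continuous_snd) isCompact_univ
  exact this.tendsto_at (mem_univ ())

end Mesh

section Consistency

theorem half_le_abs_sin_of_abs_sub_le {x y a : ℝ} (hy : a ≤ |sin y|) (hxy : |x - y| ≤ a / 2) :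
    a / 2 ≤ |sin x| := by
  have := abs_sub_abs_le_abs_sub (sin y) (sin x)
  have := Real.abs_sin_sub_sin_le y x
  rw [abs_sub_comm] at hxy
  linarith

theorem abs_cot_sub_cot_le {x y : ℝ} (hx : sin x ≠ 0) (hy : sin y ≠ 0) :
    |cot x - cot y| ≤ |x - y| / (|sin x| * |sin y|) := by
  have : cot x - cot y = sin (y - x) / (sin x * sin y) := by
    rw [cot_eq_cos_div_sin, cot_eq_cos_div_sin, sin_sub]
    field_simp
  rw [this, abs_div, abs_mul, abs_sub_comm]
  exact div_le_div_of_nonneg_right abs_sin_le_abs (by positivity)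

variable {L : ℝ} {a b : (N : ℕ) → Fin N → ℝ}

theorem IsNearlyUniformMesh.exists_abs_cot_sub_halfCot_le (ha : IsNearlyUniformMesh L (1 / 2) a)
    (hb : IsNearlyUniformMesh L 0 b) (hL : 0 < L) :
    ∃ C, ∀ᶠ N : ℕ in atTop, ∀ i j, sin (π * (a N i - b N j) / L) ≠ 0 ∧
      |cot (π * (a N i - b N j) / L) - halfCot N (i - j)| ≤ C / N := by
  obtain ⟨Ma, ha⟩ := ha
  obtain ⟨Mb, hb⟩ := hb
  set c := π / L * (Ma + Mb)
  refine ⟨2 * c, ?_⟩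
  filter_upwards [ha, hb, eventually_ge_atTop 1, eventually_ge_atTop ⌈2 * c⌉₊]
    with N haN hbN hN1 hNc i j
  have hN1 : (1 : ℝ) ≤ N := by exact_mod_cast hN1
  have hNc : 2 * c ≤ N := Nat.ceil_le.1 hNc
  set x := π * (a N i - b N j) / L
  set y := π * (((i - j : ℤ) + 1 / 2) / N)
  have hxy : |x - y| ≤ c / N ^ 3 := by
    have : x - y = π / L * ((a N i - (i + 1 / 2) * L / N) - (b N j - (j + 0) * L / N)) := by
      simp only [x, y]
      push_cast
      field_simp
      ring
    rw [this, abs_mul, abs_of_pos (by positivity)]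
    calc _ ≤ π / L * (Ma / N ^ 3 + Mb / N ^ 3) := by
          gcongr
          exact (abs_sub _ _).trans (add_le_add (haN i) (hbN j))
      _ = _ := by ring
  have hy : 1 / (N : ℝ) ≤ |sin y| := one_div_le_abs_sin_half (by positivity) _
  have hx : 1 / (N : ℝ) / 2 ≤ |sin x| := by
    refine half_le_abs_sin_of_abs_sub_le hy (hxy.trans ?_)
    rw [div_div, div_le_div_iff₀ (by positivity) (by positivity)]
    calc c * (N * 2) = 2 * c * N := by ring
      _ ≤ N * N := by gcongr
      _ ≤ 1 * N ^ 3 := by nlinarith [mul_self_nonneg (N : ℝ)]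
  have hx0 : sin x ≠ 0 := abs_pos.1 ((by positivity : 0 < 1 / (N : ℝ) / 2).trans_le hx)
  have hy0 : sin y ≠ 0 := abs_pos.1 ((by positivity : 0 < 1 / (N : ℝ)).trans_le hy)
  refine ⟨hx0, (abs_cot_sub_cot_le hx0 hy0).trans ?_⟩
  calc |x - y| / (|sin x| * |sin y|) ≤ c / N ^ 3 / (1 / (N : ℝ) / 2 * (1 / N)) := by
        gcongr
        exact (abs_nonneg _).trans hxy
    _ = 2 * c / N := by field_simp

open Matrix

variable {E : Type*} [NormedAddCommGroup E] [InnerProductSpace ℝ E] {l : ℝ → E}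

/-- The trapezoidal discretization of `z ↦ ∫ t, tangentKernel l · t * z t` with vortices `b` and
control points `a`, that is, `L / N` times the matrix `B_N` of the paper. -/
noncomputable def vortexMatrix (L : ℝ) (l : ℝ → E) {N : ℕ} (a b : Fin N → ℝ) :
    Matrix (Fin N) (Fin N) ℝ :=
  of fun i j ↦ L / N * tangentKernel l (a i) (b j)

/-- The discretization of the smooth part of `tangentKernel`. -/
noncomputable def regularMatrix (L : ℝ) (l : ℝ → E) {N : ℕ} (a b : Fin N → ℝ) :
    Matrix (Fin N) (Fin N) ℝ :=
  of fun i j ↦ L / N * regularPart L l (a i, b j)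

theorem IsSimpleClosedCurve.exists_abs_vortexMatrix_sub_le [CompleteSpace E]
    (hl : IsSimpleClosedCurve L l) (hC : ContDiff ℝ 2 l) (ha : IsNearlyUniformMesh L (1 / 2) a)
    (hb : IsNearlyUniformMesh L 0 b) :
    ∃ C, 0 ≤ C ∧ ∀ᶠ N : ℕ in atTop, ∀ i j, |(vortexMatrix L l (a N) (b N)
      - (π • discreteHilbert N + regularMatrix L l (a N) (b N))) i j| ≤ C / N ^ 2 := by
  obtain ⟨C, hcot⟩ := ha.exists_abs_cot_sub_halfCot_le hb hl.pos
  refine ⟨π * |C|, by positivity, ?_⟩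
  filter_upwards [hcot] with N hN i j
  obtain ⟨hsin, hcot⟩ := hN i j
  have hL := hl.pos.ne'
  have herr : (vortexMatrix L l (a N) (b N)
      - (π • discreteHilbert N + regularMatrix L l (a N) (b N))) i j =
      π / N * (cot (π * (a N i - b N j) / L) - halfCot N (i - j)) := by
    simp only [vortexMatrix, regularMatrix, discreteHilbert, Matrix.sub_apply, Matrix.add_apply,
      Matrix.smul_apply, of_apply, smul_eq_mul, hl.tangentKernel_eq hC hsin]
    field_simp
    ring
  rw [herr, abs_mul, abs_of_nonneg (by positivity)]
  calc _ ≤ π / N * (|C| / N) := by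
        gcongr
        exact hcot.trans (by gcongr; exact le_abs_self C)
    _ = π * |C| / N ^ 2 := by ring

theorem IsSimpleClosedCurve.exists_lipschitzWith_regularPart [CompleteSpace E]
    (hl : IsSimpleClosedCurve L l) (hC : ContDiff ℝ 3 l) :
    ∃ K, LipschitzWith K (regularPart L l) :=
  exists_lipschitzWith_of_periodic hl.pos
    (hl.contDiff_regularPart (n := 1) (by convert hC using 1; norm_num))
    (regularPart_periodic <| chordQuot_antiperiodic_fst hl.pos.ne' hl.periodic)
    (regularPart_periodic <| chordQuot_antiperiodic_snd hl.pos.ne' hl.periodic)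

theorem IsSimpleClosedCurve.exists_abs_one_vecMul_vortexMatrix_le [CompleteSpace E]
    (hl : IsSimpleClosedCurve L l) (hC : ContDiff ℝ 3 l) (ha : IsNearlyUniformMesh L (1 / 2) a)
    (hb : IsNearlyUniformMesh L 0 b) :
    ∃ C, 0 ≤ C ∧ ∀ᶠ N : ℕ in atTop, ∀ j, |(1 ᵥ* vortexMatrix L l (a N) (b N)) j| ≤ C / N := by
  obtain ⟨C₁, hC₁, herr⟩ := hl.exists_abs_vortexMatrix_sub_le (hC.of_le (by norm_num)) ha hb
  obtain ⟨K, hK⟩ := hl.exists_lipschitzWith_regularPart hC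
  obtain ⟨C₂, hC₂⟩ := ha.exists_abs_riemannSum_sub_integral_le hl.pos
    (F := fun t s ↦ regularPart L l (s, t)) (K := K) fun t ↦ by
      simpa [comp_def] using hK.comp (LipschitzWith.prodMk_right t)
  refine ⟨C₁ + |C₂|, by positivity, ?_⟩
  filter_upwards [herr, hC₂, eventually_ne_atTop 0] with N herr hC₂ hN j
  have hreg : |(1 ᵥ* regularMatrix L l (a N) (b N)) j| ≤ |C₂| / N := by
    have := hC₂ (b N j)
    rw [hl.integral_regularPart (hC.of_le (by norm_num)), sub_zero, Finset.mul_sum] at this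
    simp only [vecMul, dotProduct, Pi.one_apply, one_mul, regularMatrix, of_apply]
    exact this.trans (by gcongr; exact le_abs_self C₂)
  have hdiff : |(1 ᵥ* (vortexMatrix L l (a N) (b N)
      - (π • discreteHilbert N + regularMatrix L l (a N) (b N)))) j| ≤ C₁ / N := by
    simp only [vecMul, dotProduct, Pi.one_apply, one_mul]
    calc _ ≤ ∑ _i : Fin N, C₁ / (N : ℝ) ^ 2 :=
          (Finset.abs_sum_le_sum_abs _ _).trans (Finset.sum_le_sum fun i _ ↦ herr i j)
      _ = C₁ / N := by simp; field_simp
  rw [vecMul_sub, vecMul_add, vecMul_smul, one_vecMul_discreteHilbert, smul_zero, zero_add,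
    Pi.sub_apply] at hdiff
  calc _ = |((1 ᵥ* vortexMatrix L l (a N) (b N)) j - (1 ᵥ* regularMatrix L l (a N) (b N)) j)
        + (1 ᵥ* regularMatrix L l (a N) (b N)) j| := by rw [sub_add_cancel]
    _ ≤ C₁ / N + |C₂| / N := (abs_add_le _ _).trans (add_le_add hdiff hreg)
    _ = (C₁ + |C₂|) / N := by ring

end Consistency

/-! ### Definiteness of the logarithmic energy -/

section FourierTransport

variable {X E : Type*} [NormedAddCommGroup E] {ι : X → E} {ζ : X → ℝ} {T : Set X}

theorem norm_mul_cexp_inner [InnerProductSpace ℝ E] (x : X) (ξ : E) :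
    ‖ζ x * Complex.exp (inner ℝ (ι x) ξ * Complex.I)‖ = |ζ x| := by
  rw [norm_mul, Complex.norm_exp_ofReal_mul_I, mul_one, Complex.norm_real, norm_eq_abs]

variable [MeasurableSpace X] {μ : Measure X} [MeasurableSpace E] [BorelSpace E]

theorem measure_eq_of_map_eq_of_injOn [StandardBorelSpace X] [SecondCountableTopology E]
    (hT : MeasurableSet T) (hι : Measurable ι) (hinj : InjOn ι T) {ν₁ ν₂ : Measure X}
    (h₁ : ∀ᵐ x ∂ν₁, x ∈ T) (h₂ : ∀ᵐ x ∂ν₂, x ∈ T) (h : ν₁.map ι = ν₂.map ι) : ν₁ = ν₂ := by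
  ext S hS
  have himage : MeasurableSet (ι '' (S ∩ T)) :=
    (hS.inter hT).image_of_measurable_injOn hι (hinj.mono inter_subset_right)
  have hmap {ν : Measure X} (hν : ∀ᵐ x ∂ν, x ∈ T) : ν S = ν.map ι (ι '' (S ∩ T)) := by
    rw [Measure.map_apply hι himage]
    refine measure_congr (eventuallyEq_set.2 ?_)
    filter_upwards [hν] with x hx
    refine ⟨fun hxS ↦ ⟨x, ⟨hxS, hx⟩, rfl⟩, ?_⟩
    rintro ⟨y, ⟨hyS, hyT⟩, hxy⟩
    exact hinj hyT hx hxy ▸ hyS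
  rw [hmap h₁, hmap h₂, h]

variable [InnerProductSpace ℝ E]

/-- The Fourier transform of the signed measure `ζ μ` transported by `ι`. -/
noncomputable def fourierTransport (μ : Measure X) (ι : X → E) (ζ : X → ℝ) (ξ : E) : ℂ :=
  ∫ x, ζ x * Complex.exp (inner ℝ (ι x) ξ * Complex.I) ∂μ

theorem integrable_mul_cexp_inner [SecondCountableTopology E] (hι : Measurable ι)
    (hζ : Integrable ζ μ) (ξ : E) :
    Integrable (fun x ↦ ζ x * Complex.exp (inner ℝ (ι x) ξ * Complex.I)) μ :=
  hζ.mono (by have := hζ.aestronglyMeasurable; fun_prop)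
    (ae_of_all _ fun x ↦ (norm_mul_cexp_inner x ξ).le)

theorem continuous_fourierTransport [SecondCountableTopology E] (hι : Measurable ι)
    (hζ : Integrable ζ μ) : Continuous (fourierTransport μ ι ζ) :=
  continuous_of_dominated (fun ξ ↦ (integrable_mul_cexp_inner hι hζ ξ).aestronglyMeasurable)
    (fun ξ ↦ ae_of_all _ fun x ↦ (norm_mul_cexp_inner x ξ).le) hζ.abs
    (ae_of_all _ fun x ↦ by fun_prop)

theorem charFun_map_withDensity [SecondCountableTopology E] (hι : Measurable ι)
    (hζ : Integrable ζ μ) (ξ : E) :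
    charFun ((μ.withDensity fun x ↦ ENNReal.ofReal (ζ x)).map ι) ξ =
      fourierTransport μ ι (fun x ↦ max (ζ x) 0) ξ := by
  rw [charFun_apply, integral_map hι.aemeasurable (by fun_prop),
    integral_withDensity_eq_integral_toReal_smul₀ (by have := hζ.aemeasurable; fun_prop)
      (ae_of_all _ fun x ↦ ENNReal.ofReal_lt_top), fourierTransport]
  simp [ENNReal.toReal_ofReal']

theorem ae_eq_zero_of_fourierTransport_eq_zero [StandardBorelSpace X] [SigmaFinite μ]
    [SecondCountableTopology E]
    [CompleteSpace E] (hT : MeasurableSet T) (hμT : ∀ᵐ x ∂μ, x ∈ T) (hι : Measurable ι)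
    (hinj : InjOn ι T) (hζ : Integrable ζ μ) (h : fourierTransport μ ι ζ = 0) : ζ =ᵐ[μ] 0 := by
  have := isFiniteMeasure_withDensity_ofReal hζ.hasFiniteIntegral
  have := isFiniteMeasure_withDensity_ofReal hζ.neg.hasFiniteIntegral
  have hchar : charFun ((μ.withDensity fun x ↦ ENNReal.ofReal (ζ x)).map ι) =
      charFun ((μ.withDensity fun x ↦ ENNReal.ofReal ((-ζ) x)).map ι) := by
    ext ξ
    rw [charFun_map_withDensity hι hζ, charFun_map_withDensity hι hζ.neg, ← sub_eq_zero,
      fourierTransport, fourierTransport,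
      ← integral_sub (integrable_mul_cexp_inner hι hζ.pos_part ξ)
        (integrable_mul_cexp_inner hι hζ.neg.pos_part ξ)]
    refine Eq.trans (integral_congr_ae (ae_of_all _ fun x ↦ ?_)) (congrFun h ξ)
    simp only [← sub_mul, ← Complex.ofReal_sub, Pi.neg_apply, max_zero_sub_max_neg_zero_eq_self]
  have hac (f : X → ENNReal) : ∀ᵐ x ∂μ.withDensity f, x ∈ T :=
    (withDensity_absolutelyContinuous μ f).ae_le hμT
  have hdensity := measure_eq_of_map_eq_of_injOn hT hι hinj (hac _) (hac _)
    (Measure.ext_of_charFun hchar)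
  rw [withDensity_eq_iff_of_sigmaFinite (by have := hζ.aemeasurable; fun_prop)
    (by have := hζ.aemeasurable; fun_prop)] at hdensity
  filter_upwards [hdensity] with x hx
  have hmax := congrArg ENNReal.toReal hx
  rw [ENNReal.toReal_ofReal', ENNReal.toReal_ofReal', ← sub_eq_zero] at hmax
  exact (max_zero_sub_max_neg_zero_eq_self (ζ x)).symm.trans hmax

end FourierTransport

section GaussianEnergy

variable {X E : Type*} [NormedAddCommGroup E] [InnerProductSpace ℝ E] {ι : X → E} {ζ : X → ℝ}
  {T : Set X}

theorem integrable_exp_neg_mul_sq_norm [FiniteDimensional ℝ E] [MeasurableSpace E]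
    [BorelSpace E] {b : ℝ} (hb : 0 < b) :
    Integrable fun ξ : E ↦ exp (-b * ‖ξ‖ ^ 2) := by
  simpa [← Complex.ofReal_pow, Complex.norm_exp] using
    (GaussianFourier.integrable_cexp_neg_mul_sq_norm_add (b := b) (by simpa) 0 (0 : E)).norm

variable [MeasurableSpace X] {μ : Measure X}

theorem integral_mul_cexp_inner_sub [SFinite μ] (ξ : E) :
    ∫ p : X × X, (ζ p.1 * ζ p.2 : ℝ) * Complex.exp (inner ℝ (ι p.1 - ι p.2) ξ * Complex.I)
      ∂(μ.prod μ) = (‖fourierTransport μ ι ζ ξ‖ ^ 2 : ℝ) := by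
  have hconj : starRingEnd ℂ (fourierTransport μ ι ζ ξ) =
      ∫ x, starRingEnd ℂ (ζ x * Complex.exp (inner ℝ (ι x) ξ * Complex.I)) ∂μ :=
    integral_conj.symm
  rw [Complex.ofReal_pow, ← Complex.mul_conj', hconj, fourierTransport, ← integral_prod_mul]
  refine integral_congr_ae (ae_of_all _ fun p ↦ ?_)
  simp only [map_mul, Complex.conj_ofReal, ← Complex.exp_conj, Complex.conj_I, inner_sub_left,
    Complex.ofReal_sub, Complex.ofReal_mul, sub_mul, Complex.exp_sub, mul_neg,
    Complex.exp_neg]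
  ring

/-- The energy of the signed measure `ζ μ`, transported by `ι`, for the Gaussian interaction
kernel `exp (-a ‖x - y‖ ^ 2)`. -/
noncomputable def gaussianEnergy (μ : Measure X) (ι : X → E) (ζ : X → ℝ) (a : ℝ) : ℝ :=
  ∫ p : X × X, ζ p.1 * ζ p.2 * exp (-a * ‖ι p.1 - ι p.2‖ ^ 2) ∂(μ.prod μ)

variable [MeasurableSpace E] [BorelSpace E] [FiniteDimensional ℝ E]

theorem integral_exp_mul_norm_fourierTransport_sq [SFinite μ] (hι : Measurable ι)
    (hζ : Integrable ζ μ) {b : ℝ} (hb : 0 < b) :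
    ∫ ξ : E, exp (-b * ‖ξ‖ ^ 2) * ‖fourierTransport μ ι ζ ξ‖ ^ 2 =
      (π / b) ^ (Module.finrank ℝ E / 2 : ℝ) * gaussianEnergy μ ι ζ (1 / (4 * b)) := by
  let G (ξ : E) (p : X × X) : ℂ := (ζ p.1 * ζ p.2 : ℝ) *
    Complex.exp (-(b : ℂ) * ‖ξ‖ ^ 2 + Complex.I * inner ℝ (ι p.1 - ι p.2) ξ)
  have hG : Integrable (uncurry G) (volume.prod (μ.prod μ)) := by
    refine ((integrable_exp_neg_mul_sq_norm hb).mul_prod (hζ.mul_prod hζ)).mono ?_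
      (ae_of_all _ fun q ↦ ?_)
    · have hζζ := (hζ.mul_prod hζ).aestronglyMeasurable.comp_snd (μ := (volume : Measure E))
      exact (Complex.continuous_ofReal.comp_aestronglyMeasurable hζζ).mul (by fun_prop)
    · simp [G, uncurry, Complex.norm_exp, ← Complex.ofReal_pow, mul_comm]
  have hleft (ξ : E) : ∫ p, G ξ p ∂(μ.prod μ) =
      (exp (-b * ‖ξ‖ ^ 2) * ‖fourierTransport μ ι ζ ξ‖ ^ 2 : ℝ) := by
    rw [Complex.ofReal_mul, ← integral_mul_cexp_inner_sub, ← integral_const_mul]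
    refine integral_congr_ae (ae_of_all _ fun p ↦ ?_)
    simp only [G, Complex.exp_add]
    push_cast
    ring_nf
  have hright (p : X × X) : ∫ ξ : E, G ξ p = ((π / b) ^ (Module.finrank ℝ E / 2 : ℝ) *
      (ζ p.1 * ζ p.2 * exp (-(1 / (4 * b)) * ‖ι p.1 - ι p.2‖ ^ 2)) : ℝ) := by
    rw [integral_const_mul, GaussianFourier.integral_cexp_neg_mul_sq_norm_add (by simpa),
      Complex.I_sq]
    push_cast [Complex.ofReal_cpow (show 0 ≤ π / b by positivity)]
    ring_nf
  refine Complex.ofReal_injective ?_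
  rw [gaussianEnergy, ← integral_const_mul, ← integral_complex_ofReal, ← integral_complex_ofReal]
  simp_rw [← hleft, ← hright]
  exact integral_integral_swap hG

theorem gaussianEnergy_nonneg [SFinite μ] (hι : Measurable ι) (hζ : Integrable ζ μ) {a : ℝ}
    (ha : 0 < a) : 0 ≤ gaussianEnergy μ ι ζ a := by
  have hb : 0 < 1 / (4 * a) := by positivity
  have h := integral_exp_mul_norm_fourierTransport_sq hι hζ hb
  rw [show 1 / (4 * (1 / (4 * a))) = a by field_simp] at h
  refine nonneg_of_mul_nonneg_right (h ▸ integral_nonneg fun ξ ↦ by positivity) ?_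
  positivity

theorem fourierTransport_eq_zero_of_gaussianEnergy_eq_zero [SFinite μ] (hι : Measurable ι)
    (hζ : Integrable ζ μ) {a : ℝ} (ha : 0 < a) (h : gaussianEnergy μ ι ζ a = 0) :
    fourierTransport μ ι ζ = 0 := by
  have hb : 0 < 1 / (4 * a) := by positivity
  have hzero := integral_exp_mul_norm_fourierTransport_sq hι hζ hb
  rw [show 1 / (4 * (1 / (4 * a))) = a by field_simp, h, mul_zero] at hzero
  have hcont := continuous_fourierTransport hι hζ
  have hint : Integrable fun ξ : E ↦
      exp (-(1 / (4 * a)) * ‖ξ‖ ^ 2) * ‖fourierTransport μ ι ζ ξ‖ ^ 2 := by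
    refine (integrable_exp_neg_mul_sq_norm hb).mul_bdd (c := (∫ x, |ζ x| ∂μ) ^ 2)
      (by fun_prop) (ae_of_all _ fun ξ ↦ ?_)
    rw [norm_pow, norm_norm]
    gcongr
    refine (norm_integral_le_integral_norm _).trans_eq ?_
    simp only [norm_mul_cexp_inner]
  rw [integral_eq_zero_iff_of_nonneg (fun ξ ↦ by positivity) hint,
    Continuous.ae_eq_iff_eq volume (by fun_prop) continuous_zero] at hzero
  funext ξ
  simpa using congrFun hzero ξ

end GaussianEnergy

section Frullani

theorem abs_exp_neg_sub_exp_neg_le (x y : ℝ) :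
    |exp (-x) - exp (-y)| ≤ |x - y| * exp (-min x y) := by
  wlog hxy : x ≤ y generalizing x y
  · rw [abs_sub_comm, abs_sub_comm x, min_comm]
    exact this y x (le_of_not_ge hxy)
  have hexp : exp (-y) ≤ exp (-x) := by gcongr
  rw [abs_of_nonneg (sub_nonneg.2 hexp), abs_of_nonpos (sub_nonpos.2 hxy), min_eq_left hxy]
  have hfactor : exp (-y) = exp (x - y) * exp (-x) := by rw [← exp_add]; ring_nf
  rw [hfactor]
  nlinarith [add_one_le_exp (x - y), exp_pos (-x)]

theorem integrableOn_inv_mul_exp_neg_sub_exp_neg {c : ℝ} (hc : 0 < c) :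
    IntegrableOn (fun a ↦ a⁻¹ * (exp (-a) - exp (-a * c))) (Ioi 0) := by
  refine ((exp_neg_integrableOn_Ioi 0 (lt_min one_pos hc)).const_mul |1 - c|).mono'
    (by fun_prop) ?_
  filter_upwards [ae_restrict_mem measurableSet_Ioi] with a (ha : 0 < a)
  have hmin : min a (a * c) = a * min 1 c := by rw [mul_min_of_nonneg _ _ ha.le, mul_one]
  have hbound := abs_exp_neg_sub_exp_neg_le a (a * c)
  rw [hmin, ← mul_one_sub, abs_mul, abs_of_pos ha] at hbound
  rwa [norm_mul, norm_inv, norm_eq_abs, norm_eq_abs, abs_of_pos ha, inv_mul_le_iff₀ ha,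
    ← mul_assoc, neg_mul, neg_mul, mul_comm (min 1 c)]

theorem integral_inv_mul_exp_neg_sub_exp_neg {c : ℝ} (hc : 0 < c) :
    ∫ a in Ioi (0 : ℝ), a⁻¹ * (exp (-a) - exp (-a * c)) = log c := by
  have hf : Continuous fun a : ℝ ↦ exp (-a) := by fun_prop
  have h := Frullani.integral_Ioi_eq (f := fun a : ℝ ↦ exp (-a)) (L := 1) (R := 0)
    (hf.locallyIntegrable.locallyIntegrableOn _) one_pos hc
    ((hf.tendsto' 0 1 (by simp)).mono_left inf_le_left) tendsto_exp_neg_atTop_nhds_zero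
  simp only [one_mul, smul_eq_mul, div_one, sub_zero, mul_one, mul_comm c,
    neg_mul] at h ⊢
  exact h (by simpa using integrableOn_inv_mul_exp_neg_sub_exp_neg hc)

theorem integral_abs_inv_mul_exp_neg_sub_exp_neg {c : ℝ} (hc : 0 < c) :
    ∫ a in Ioi (0 : ℝ), |a⁻¹ * (exp (-a) - exp (-a * c))| = |log c| := by
  rw [← integral_inv_mul_exp_neg_sub_exp_neg hc]
  rcases le_total c 1 with h | h
  · have hsign (a : ℝ) (ha : a ∈ Ioi 0) : a⁻¹ * (exp (-a) - exp (-a * c)) ≤ 0 := by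
      have ha' : 0 < a := ha
      refine mul_nonpos_of_nonneg_of_nonpos (by positivity) (sub_nonpos.2 (exp_le_exp.2 ?_))
      nlinarith
    rw [abs_of_nonpos (setIntegral_nonpos measurableSet_Ioi hsign), ← integral_neg]
    exact setIntegral_congr_fun measurableSet_Ioi fun a ha ↦ abs_of_nonpos (hsign a ha)
  · have hsign (a : ℝ) (ha : a ∈ Ioi 0) : 0 ≤ a⁻¹ * (exp (-a) - exp (-a * c)) := by
      have ha' : 0 < a := ha
      refine mul_nonneg (by positivity) (sub_nonneg.2 (exp_le_exp.2 ?_))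
      nlinarith
    rw [abs_of_nonneg (setIntegral_nonneg measurableSet_Ioi hsign)]
    exact setIntegral_congr_fun measurableSet_Ioi fun a ha ↦ abs_of_nonneg (hsign a ha)

end Frullani

section LogEnergy

variable {X E : Type*} [MeasurableSpace X] {μ : Measure X}

theorem ae_fst_ne_snd [StandardBorelSpace X] [SFinite μ] [NullSingletonClass μ] :
    ∀ᵐ p : X × X ∂μ.prod μ, p.1 ≠ p.2 := by
  refine (Measure.ae_prod_iff_ae_ae
    (measurableSet_eq_fun measurable_fst measurable_snd).compl).2 ?_
  refine ae_of_all _ fun x ↦ ?_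
  filter_upwards [compl_mem_ae_iff.2 (measure_singleton x)] with y hy h using hy h.symm

variable [NormedAddCommGroup E] [InnerProductSpace ℝ E] [FiniteDimensional ℝ E]
  [MeasurableSpace E] [BorelSpace E] {ι : X → E} {ζ : X → ℝ} {T : Set X}

theorem integrable_frullani_kernel [SFinite μ] (hι : Measurable ι)
    (hne : ∀ᵐ p ∂μ.prod μ, ι p.1 ≠ ι p.2) (hζ : AEStronglyMeasurable ζ μ)
    (hint : Integrable (fun p : X × X ↦ ζ p.1 * ζ p.2 * log ‖ι p.1 - ι p.2‖) (μ.prod μ)) :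
    Integrable (uncurry fun (p : X × X) (a : ℝ) ↦
      ζ p.1 * ζ p.2 * (a⁻¹ * (exp (-a) - exp (-a * ‖ι p.1 - ι p.2‖ ^ 2))))
      ((μ.prod μ).prod (volume.restrict (Ioi 0))) := by
  have hmeas : AEStronglyMeasurable (fun p : X × X ↦ ζ p.1 * ζ p.2) (μ.prod μ) :=
    hζ.comp_fst.mul hζ.comp_snd
  rw [integrable_prod_iff (by unfold uncurry; exact hmeas.comp_fst.mul (by fun_prop))]
  simp only [uncurry_apply_pair]
  constructor
  · filter_upwards [hne] with p hp
    exact (integrableOn_inv_mul_exp_neg_sub_exp_neg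
      (pow_pos (norm_sub_pos_iff.2 hp) 2)).const_mul _
  · refine (hint.abs.const_mul 2).congr ?_
    filter_upwards [hne] with p hp
    simp only [norm_mul (ζ p.1 * ζ p.2), norm_eq_abs]
    rw [integral_const_mul,
      integral_abs_inv_mul_exp_neg_sub_exp_neg (pow_pos (norm_sub_pos_iff.2 hp) 2), log_pow,
      abs_mul, abs_mul _ (log _), Nat.cast_ofNat, abs_two, mul_left_comm]

theorem integral_frullani_kernel [SFinite μ] (hι : Measurable ι) (hζ : Integrable ζ μ)
    (hmean : ∫ x, ζ x ∂μ = 0) {a : ℝ} (ha : 0 < a) :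
    ∫ p : X × X, ζ p.1 * ζ p.2 * (a⁻¹ * (exp (-a) - exp (-a * ‖ι p.1 - ι p.2‖ ^ 2))) ∂μ.prod μ =
      -(a⁻¹ * gaussianEnergy μ ι ζ a) := by
  have hζζ : Integrable (fun p : X × X ↦ ζ p.1 * ζ p.2) (μ.prod μ) := hζ.mul_prod hζ
  have hmass : ∫ p : X × X, ζ p.1 * ζ p.2 ∂μ.prod μ = 0 := by
    rw [integral_prod_mul, hmean, zero_mul]
  have hexp : Integrable (fun p : X × X ↦
      ζ p.1 * ζ p.2 * exp (-a * ‖ι p.1 - ι p.2‖ ^ 2)) (μ.prod μ) := by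
    refine hζζ.mul_bdd (c := 1) (by fun_prop) (ae_of_all _ fun p ↦ ?_)
    rw [norm_of_nonneg (exp_nonneg _), exp_le_one_iff, neg_mul]
    exact neg_nonpos.2 (by positivity)
  simp_rw [mul_left_comm _ a⁻¹, mul_sub]
  rw [integral_sub ((hζζ.mul_const _).const_mul _) (hexp.const_mul _), integral_const_mul,
    integral_mul_const, hmass, integral_const_mul, gaussianEnergy]
  ring

/-- `log r` is the integral over `a > 0` of `(exp (-a) - exp (-a r²)) / (2 a)`: on densities of
mean zero minus the log energy is a superposition of Gaussian energies. -/
theorem ae_eq_zero_of_integral_log_norm_sub_eq_zero [StandardBorelSpace X] [SigmaFinite μ]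
    [NullSingletonClass μ] (hT : MeasurableSet T) (hμT : ∀ᵐ x ∂μ, x ∈ T) (hι : Measurable ι)
    (hinj : InjOn ι T) (hζ : Integrable ζ μ) (hmean : ∫ x, ζ x ∂μ = 0)
    (hint : Integrable (fun p : X × X ↦ ζ p.1 * ζ p.2 * log ‖ι p.1 - ι p.2‖) (μ.prod μ))
    (hzero : ∫ p : X × X, ζ p.1 * ζ p.2 * log ‖ι p.1 - ι p.2‖ ∂μ.prod μ = 0) : ζ =ᵐ[μ] 0 := by
  have hne : ∀ᵐ p ∂μ.prod μ, ι p.1 ≠ ι p.2 := by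
    filter_upwards [ae_fst_ne_snd, Measure.quasiMeasurePreserving_fst.ae hμT,
      Measure.quasiMeasurePreserving_snd.ae hμT] with p hp h₁ h₂ h using hp (hinj h₁ h₂ h)
  have hkernel := integrable_frullani_kernel hι hne hζ.aestronglyMeasurable hint
  have hinner : ∀ᵐ p ∂μ.prod μ, ∫ a in Ioi (0 : ℝ), ζ p.1 * ζ p.2 *
      (a⁻¹ * (exp (-a) - exp (-a * ‖ι p.1 - ι p.2‖ ^ 2))) =
        2 * (ζ p.1 * ζ p.2 * log ‖ι p.1 - ι p.2‖) := by
    filter_upwards [hne] with p hp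
    rw [integral_const_mul,
      integral_inv_mul_exp_neg_sub_exp_neg (pow_pos (norm_sub_pos_iff.2 hp) 2), log_pow,
      Nat.cast_ofNat, mul_left_comm]
  have houter (a : ℝ) (ha : a ∈ Ioi 0) := integral_frullani_kernel hι hζ hmean ha
  have henergy : ∫ a in Ioi (0 : ℝ), -(a⁻¹ * gaussianEnergy μ ι ζ a) = 0 := by
    rw [← setIntegral_congr_fun measurableSet_Ioi houter, ← integral_integral_swap hkernel,
      integral_congr_ae hinner, integral_const_mul, hzero, mul_zero]
  have hgauss : ∀ᵐ a ∂volume.restrict (Ioi (0 : ℝ)), a⁻¹ * gaussianEnergy μ ι ζ a = 0 := by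
    rw [integral_neg, neg_eq_zero] at henergy
    refine (integral_eq_zero_iff_of_nonneg_ae ?_ ?_).1 henergy
    · filter_upwards [ae_restrict_mem measurableSet_Ioi] with a (ha : 0 < a)
      exact mul_nonneg (by positivity) (gaussianEnergy_nonneg hι hζ ha)
    · exact integrable_neg_iff.1 (IntegrableOn.congr_fun hkernel.integral_prod_right houter
        measurableSet_Ioi)
  have : (ae (volume.restrict (Ioi (0 : ℝ)))).NeBot := ae_restrict_neBot.2 (by simp)
  obtain ⟨a, hgauss, ha : 0 < a⟩ := (hgauss.and (ae_restrict_mem measurableSet_Ioi)).exists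
  refine ae_eq_zero_of_fourierTransport_eq_zero hT hμT hι hinj hζ
    (fourierTransport_eq_zero_of_gaussianEnergy_eq_zero hι hζ ha ?_)
  exact (mul_eq_zero.1 hgauss).resolve_left (by positivity)

end LogEnergy

/-! ### Logarithmic potentials on a curve -/

section LogSin

variable {L : ℝ}

theorem countable_setOf_sin_pi_mul_sub_div_eq_zero (hL : L ≠ 0) (t : ℝ) :
    {s | sin (π * (s - t) / L) = 0}.Countable := by
  refine (countable_range fun m : ℤ ↦ t + m * L).mono fun s hs ↦ ?_
  obtain ⟨m, hm⟩ := (sin_pi_mul_div_eq_zero_iff hL).1 hs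
  exact ⟨m, by linear_combination -hm⟩

theorem intervalIntegrable_log_sin_pi_mul_sub_div (L t a b : ℝ) :
    IntervalIntegrable (fun s ↦ log (sin (π * (s - t) / L))) volume a b :=
  AnalyticOnNhd.meromorphicOn (f := fun s ↦ sin (π * (s - t) / L))
    (fun s _ ↦ by fun_prop) |>.intervalIntegrable_log

theorem integral_abs_log_sin_pi_mul_sub_div (hL : L ≠ 0) (t : ℝ) :
    ∫ s in (0 : ℝ)..L, |log (sin (π * (s - t) / L))| =
      ∫ u in (0 : ℝ)..L, |log (sin (π * u / L))| := by
  have hperiodic : Periodic (fun u ↦ |log (sin (π * u / L))|) L := fun u ↦ by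
    have hshift : π * (u + L) / L = π * u / L + π := by field_simp
    simp only [hshift, sin_add_pi, log_neg_eq_log]
  rw [intervalIntegral.integral_comp_sub_right (fun u ↦ |log (sin (π * u / L))|) t]
  simpa [sub_eq_add_neg, add_comm] using hperiodic.intervalIntegral_add_eq (-t) 0

end LogSin

theorem hasDerivAt_log_norm_sub {E : Type*} [NormedAddCommGroup E] [InnerProductSpace ℝ E]
    {l : ℝ → E} (hl : Differentiable ℝ l) {s t : ℝ} (hst : l s ≠ l t) :
    HasDerivAt (fun s ↦ log ‖l s - l t‖) (tangentKernel l s t) s := by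
  have hne := norm_ne_zero_iff.2 (sub_ne_zero.2 hst)
  have h := ((((hl s).hasDerivAt.sub_const (l t)).norm_sq).log (pow_ne_zero 2 hne)).div_const 2
  simp only [log_pow, Nat.cast_ofNat] at h
  refine (h.congr_deriv ?_).congr_of_eventuallyEq (.of_forall fun s ↦ ?_)
  · rw [tangentKernel]; ring
  · ring

namespace IsSimpleClosedCurve

variable {E : Type*} [NormedAddCommGroup E] [InnerProductSpace ℝ E] {L : ℝ} {l : ℝ → E}

theorem log_norm_sub (hl : IsSimpleClosedCurve L l) {s t : ℝ} (hst : sin (π * (s - t) / L) ≠ 0) :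
    log ‖l s - l t‖ = log (sin (π * (s - t) / L)) + log ‖chordQuot L l (s, t)‖ := by
  rw [← sin_smul_chordQuot hl.pos.ne' hl.periodic (s, t), norm_smul, norm_eq_abs,
    log_mul (abs_ne_zero.2 hst) (norm_ne_zero_iff.2 <| hl.chordQuot_ne_zero _), log_abs]

theorem ae_log_norm_sub (hl : IsSimpleClosedCurve L l) (t : ℝ) :
    (fun s ↦ log ‖l s - l t‖) =ᵐ[volume]
      fun s ↦ log (sin (π * (s - t) / L)) + log ‖chordQuot L l (s, t)‖ := by
  filter_upwards [(countable_setOf_sin_pi_mul_sub_div_eq_zero hl.pos.ne' t).ae_notMem volume]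
    with s hs using hl.log_norm_sub hs

variable [CompleteSpace E]

theorem continuous_log_norm_chordQuot (hl : IsSimpleClosedCurve L l) (hC : ContDiff ℝ 1 l) :
    Continuous fun p ↦ log ‖chordQuot L l p‖ :=
  (contDiff_chordQuot (n := 0) hl.pos (by simpa using hC) hl.periodic).continuous.norm.log
    fun p ↦ norm_ne_zero_iff.2 (hl.chordQuot_ne_zero p)

theorem intervalIntegrable_log_norm_sub (hl : IsSimpleClosedCurve L l) (hC : ContDiff ℝ 1 l)
    (t a b : ℝ) : IntervalIntegrable (fun s ↦ log ‖l s - l t‖) volume a b := by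
  have hq : Continuous fun s ↦ log ‖chordQuot L l (s, t)‖ :=
    (hl.continuous_log_norm_chordQuot hC).comp (f := fun s ↦ (s, t)) (by fun_prop)
  exact ((intervalIntegrable_log_sin_pi_mul_sub_div L t a b).add
    (hq.intervalIntegrable a b)).congr_ae
      (ae_restrict_of_ae (hl.ae_log_norm_sub t).symm)

theorem exists_integral_abs_log_norm_sub_le (hl : IsSimpleClosedCurve L l) (hC : ContDiff ℝ 1 l) :
    ∃ W, ∀ t, ∫ s in (0 : ℝ)..L, |log ‖l s - l t‖| ≤ W := by
  have hq := hl.continuous_log_norm_chordQuot hC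
  have hperiodic {c : ℝ × ℝ} (hc : Antiperiodic (chordQuot L l) c) :
      Periodic (fun p ↦ log ‖chordQuot L l p‖) c := (periodic_norm_of_antiperiodic hc).comp log
  obtain ⟨C, hbound⟩ := (isCompact_range_of_periodic hl.pos hq
    (hperiodic <| chordQuot_antiperiodic_fst hl.pos.ne' hl.periodic)
    (hperiodic <| chordQuot_antiperiodic_snd hl.pos.ne' hl.periodic)).isBounded.exists_norm_le
  refine ⟨(∫ u in (0 : ℝ)..L, |log (sin (π * u / L))|) + ∫ _ in (0 : ℝ)..L, C, fun t ↦ ?_⟩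
  have hsin := (intervalIntegrable_log_sin_pi_mul_sub_div L t 0 L).abs
  rw [← integral_abs_log_sin_pi_mul_sub_div hl.pos.ne' t,
    ← intervalIntegral.integral_add hsin intervalIntegrable_const]
  refine intervalIntegral.integral_mono_ae hl.pos.le
    (hl.intervalIntegrable_log_norm_sub hC t 0 L).abs (hsin.add intervalIntegrable_const) ?_
  filter_upwards [hl.ae_log_norm_sub t] with s hs
  rw [hs]
  exact (abs_add_le _ _).trans (by gcongr; exact hbound _ ⟨(s, t), rfl⟩)

theorem continuous_sub_mul_log_norm_sub (hl : IsSimpleClosedCurve L l) (hC : ContDiff ℝ 1 l)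
    {φ : ℝ → ℝ} (hφ : ContDiff ℝ 1 φ) (hφL : Periodic φ L) (t : ℝ) :
    Continuous fun s ↦ (φ s - φ t) * log ‖l s - l t‖ := by
  have hqφ : Continuous fun s ↦ chordQuot L φ (s, t) :=
    (contDiff_chordQuot (n := 0) hl.pos (by simpa using hφ) hφL).continuous.comp
      (f := fun s ↦ (s, t)) (by fun_prop)
  have hql : Continuous fun s ↦ log ‖chordQuot L l (s, t)‖ :=
    (hl.continuous_log_norm_chordQuot hC).comp (f := fun s ↦ (s, t)) (by fun_prop)
  have hsinlog : Continuous fun s ↦ sin (π * (s - t) / L) * log (sin (π * (s - t) / L)) :=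
    continuous_mul_log.comp (f := fun s ↦ sin (π * (s - t) / L)) (by fun_prop)
  have hfactor (s : ℝ) : (φ s - φ t) * log ‖l s - l t‖ =
      chordQuot L φ (s, t) * (sin (π * (s - t) / L) * log (sin (π * (s - t) / L)) +
        sin (π * (s - t) / L) * log ‖chordQuot L l (s, t)‖) := by
    rw [← sin_smul_chordQuot hl.pos.ne' hφL (s, t), smul_eq_mul]
    by_cases hst : sin (π * (s - t) / L) = 0
    · simp [hst]
    · rw [hl.log_norm_sub hst]
      ring
  simp_rw [hfactor]
  exact hqφ.mul (hsinlog.add ((by fun_prop : Continuous fun s ↦ sin (π * (s - t) / L)).mul hql))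

end IsSimpleClosedCurve

section LogPotential

variable {E : Type*} [NormedAddCommGroup E] [InnerProductSpace ℝ E] {L : ℝ} {l : ℝ → E}

/-- The logarithmic single-layer potential of the density `f` on the curve `l`, evaluated at the
point `l t`. -/
noncomputable def logPotential (L : ℝ) (l : ℝ → E) (f : ℝ → ℝ) (t : ℝ) : ℝ :=
  ∫ s in (0 : ℝ)..L, f s * log ‖l s - l t‖

theorem IsSimpleClosedCurve.integral_sub_mul_tangentKernel [CompleteSpace E]
    (hl : IsSimpleClosedCurve L l) (hC : ContDiff ℝ 1 l) {φ : ℝ → ℝ} (hφ : ContDiff ℝ 1 φ)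
    (hφL : Periodic φ L) {m : ℝ × ℝ → ℝ} (hm : Continuous m)
    (hmφ : ∀ s t, sin (π * (s - t) / L) ≠ 0 → m (s, t) = (φ s - φ t) * tangentKernel l s t)
    (t : ℝ) : ∫ s in (0 : ℝ)..L, m (s, t) = -logPotential L l (deriv φ) t := by
  have hm' : IntervalIntegrable (fun s ↦ m (s, t)) volume 0 L :=
    Continuous.intervalIntegrable (by fun_prop) _ _
  have hφlog : IntervalIntegrable (fun s ↦ deriv φ s * log ‖l s - l t‖) volume 0 L :=
    (hl.intervalIntegrable_log_norm_sub hC t 0 L).continuousOn_mul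
      (hφ.continuous_deriv le_rfl).continuousOn
  have hderiv (s : ℝ) (hst : sin (π * (s - t) / L) ≠ 0) :
      HasDerivAt (fun s ↦ (φ s - φ t) * log ‖l s - l t‖)
        (m (s, t) + deriv φ s * log ‖l s - l t‖) s := by
    refine (((hφ.differentiable one_ne_zero s).hasDerivAt.sub_const _).mul
      (hasDerivAt_log_norm_sub (hC.differentiable one_ne_zero)
        (mt hl.apply_eq_apply_iff.1 hst))).congr_deriv ?_
    rw [hmφ s t hst]
    ring
  have hFTC := integral_eq_of_hasDerivAt_off_countable _ _
    (countable_setOf_sin_pi_mul_sub_div_eq_zero hl.pos.ne' t)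
    (hl.continuous_sub_mul_log_norm_sub hC hφ hφL t).continuousOn
    (fun s hs ↦ hderiv s hs.2) (hm'.add hφlog)
  rw [intervalIntegral.integral_add hm' hφlog, hl.periodic.eq, hφL.eq, sub_self] at hFTC
  exact eq_neg_of_add_eq_zero_left hFTC

end LogPotential

section SchurTest

variable {X Y : Type*} [MeasurableSpace X] [MeasurableSpace Y]

theorem integrable_comp_snd_mul_of_integral_abs_le {μ : Measure X} {ν : Measure Y} [SFinite μ]
    [SFinite ν] {h : Y → ℝ} {k : X × Y → ℝ} {W : ℝ} (hh : Integrable h ν)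
    (hk : AEStronglyMeasurable k (μ.prod ν)) (hsection : ∀ y, Integrable (fun x ↦ k (x, y)) μ)
    (hW : ∀ y, ∫ x, |k (x, y)| ∂μ ≤ W) : Integrable (fun p ↦ h p.2 * k p) (μ.prod ν) := by
  have hmeas : AEStronglyMeasurable (fun p ↦ h p.2 * k p) (μ.prod ν) :=
    hh.aestronglyMeasurable.comp_snd.mul hk
  refine (integrable_prod_iff' hmeas).2
    ⟨ae_of_all _ fun y ↦ (hsection y).const_mul (h y), ?_⟩
  refine (hh.norm.mul_const W).mono' hmeas.norm.prod_swap.integral_prod_right'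
    (ae_of_all _ fun y ↦ ?_)
  simp_rw [norm_mul, integral_const_mul, norm_eq_abs, abs_mul, abs_abs]
  rw [abs_of_nonneg (integral_nonneg fun _ ↦ abs_nonneg _)]
  gcongr
  exact hW y

theorem integrable_mul_mul_of_integral_abs_le {μ : Measure X} [SFinite μ] {f g : X → ℝ}
    {k : X × X → ℝ} {W : ℝ} (hf : MemLp f 2 μ) (hg : MemLp g 2 μ)
    (hk : AEStronglyMeasurable k (μ.prod μ)) (hsymm : ∀ p, k p.swap = k p)
    (hsection : ∀ y, Integrable (fun x ↦ k (x, y)) μ) (hW : ∀ y, ∫ x, |k (x, y)| ∂μ ≤ W) :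
    Integrable (fun p ↦ f p.1 * g p.2 * k p) (μ.prod μ) := by
  have hgk := integrable_comp_snd_mul_of_integral_abs_le hg.integrable_sq hk hsection hW
  have hfk := (integrable_comp_snd_mul_of_integral_abs_le hf.integrable_sq hk hsection hW).swap
  refine (hfk.abs.add hgk.abs).mono'
    ((hf.aestronglyMeasurable.comp_fst.mul hg.aestronglyMeasurable.comp_snd).mul hk)
    (ae_of_all _ fun p ↦ ?_)
  simp only [comp_apply, Prod.snd_swap, hsymm, Pi.add_apply, abs_mul, abs_pow, norm_mul,
    norm_eq_abs, ← add_mul]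
  gcongr
  nlinarith [sq_nonneg (|f p.1| - |g p.2|), sq_nonneg |f p.1|, sq_nonneg |g p.2|]

end SchurTest

theorem memLp_two_restrict_Ioc_of_continuous {f : ℝ → ℝ} (hf : Continuous f) (a b : ℝ) :
    MemLp f 2 (volume.restrict (Ioc a b)) :=
  (memLp_two_iff_integrable_sq hf.aestronglyMeasurable).2 (hf.pow 2).integrableOn_Ioc

section DuBoisReymond

variable {L : ℝ}

theorem exists_continuous_periodic_eqOn_Ico (hL : 0 < L) {g : ℝ → ℝ}
    (hg : ContinuousOn g (Icc 0 L)) (h₀ : g 0 = g L) :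
    ∃ f, Continuous f ∧ Periodic f L ∧ EqOn f g (Ico 0 L) := by
  have : Fact (0 < L) := ⟨hL⟩
  refine ⟨fun s ↦ AddCircle.liftIco L 0 g (s : AddCircle L), ?_, fun s ↦ ?_, fun s hs ↦ ?_⟩
  · exact (AddCircle.liftIco_continuous (by simpa using h₀) (by simpa using hg)).comp
      (AddCircle.continuous_mk' L)
  · simp
  · exact AddCircle.liftIco_coe_apply (by simpa using hs)

theorem integral_sub_average_mul {f h : ℝ → ℝ} (hf : IntervalIntegrable f volume 0 L)
    (hh : IntervalIntegrable h volume 0 L)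
    (hfh : IntervalIntegrable (fun s ↦ f s * h s) volume 0 L) :
    ∫ s in (0 : ℝ)..L, (f s - L⁻¹ * ∫ s in (0 : ℝ)..L, f s) * h s =
      ∫ s in (0 : ℝ)..L, f s * (h s - L⁻¹ * ∫ s in (0 : ℝ)..L, h s) := by
  simp_rw [sub_mul, mul_sub]
  rw [intervalIntegral.integral_sub hfh (hh.const_mul _),
    intervalIntegral.integral_sub hfh (hf.mul_const _), intervalIntegral.integral_const_mul,
    intervalIntegral.integral_mul_const]
  ring

theorem integral_sub_average_eq_zero (hL : L ≠ 0) {f : ℝ → ℝ}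
    (hf : IntervalIntegrable f volume 0 L) :
    ∫ s in (0 : ℝ)..L, (f s - L⁻¹ * ∫ s in (0 : ℝ)..L, f s) = 0 := by
  rw [intervalIntegral.integral_sub hf intervalIntegrable_const, intervalIntegral.integral_const,
    sub_zero, smul_eq_mul, mul_inv_cancel_left₀ hL, sub_self]

theorem ae_eq_average_of_forall_integral_mul_eq_zero (hL : 0 < L) {h : ℝ → ℝ}
    (hh : IntervalIntegrable h volume 0 L)
    (hzero : ∀ f : ℝ → ℝ, Continuous f → Periodic f L → ∫ s in (0 : ℝ)..L, f s = 0 →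
      ∫ s in (0 : ℝ)..L, f s * h s = 0) :
    h =ᵐ[volume.restrict (Ioc 0 L)] fun _ ↦ L⁻¹ * ∫ s in (0 : ℝ)..L, h s := by
  set c := L⁻¹ * ∫ s in (0 : ℝ)..L, h s with hc
  have hperiodic (f : ℝ → ℝ) (hf : Continuous f) (hfL : Periodic f L) :
      ∫ s in (0 : ℝ)..L, f s * (h s - c) = 0 := by
    have hfi := hf.intervalIntegrable (μ := volume) 0 L
    rw [hc, ← integral_sub_average_mul hfi hh (hh.continuousOn_mul hf.continuousOn)]
    exact hzero _ (hf.sub continuous_const) (fun s ↦ by simp only [hfL s])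
      (integral_sub_average_eq_zero hL.ne' hfi)
  have hdiff := hh.sub (intervalIntegrable_const (c := c))
  rw [intervalIntegrable_iff_integrableOn_Ioo_of_le hL.le] at hdiff
  rw [← restrict_Ioo_eq_restrict_Ioc]
  refine ((ae_restrict_iff' measurableSet_Ioo).2
    (isOpen_Ioo.ae_eq_zero_of_integral_contDiff_smul_eq_zero hdiff.locallyIntegrableOn
      fun g hg _ hsupp ↦ ?_)).mono fun s hs ↦ sub_eq_zero.1 hs
  have hg₀ (s : ℝ) (hs : s ∉ Ioo 0 L) : g s = 0 :=
    image_eq_zero_of_notMem_tsupport fun h ↦ hs (hsupp h)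
  obtain ⟨f, hf, hfL, hfg⟩ := exists_continuous_periodic_eqOn_Ico hL hg.continuous.continuousOn
    (by rw [hg₀ 0 (by simp), hg₀ L (by simp)])
  refine Eq.trans ?_ (hperiodic f hf hfL)
  rw [intervalIntegral.integral_of_le hL.le, integral_Ioc_eq_integral_Ioo,
    ← setIntegral_eq_integral_of_forall_compl_eq_zero fun s hs ↦ by rw [hg₀ s hs, zero_smul]]
  exact setIntegral_congr_fun measurableSet_Ioo fun s hs ↦ by
    rw [smul_eq_mul, hfg (Ioo_subset_Ico_self hs)]

end DuBoisReymond

namespace IsSimpleClosedCurve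

variable {E : Type*} [NormedAddCommGroup E] [InnerProductSpace ℝ E] {L : ℝ} {l : ℝ → E}
  {f g : ℝ → ℝ}

theorem injOn_Ioc (hl : IsSimpleClosedCurve L l) : InjOn l (Ioc 0 L) := fun s hs t ht hst ↦ by
  obtain ⟨m, hm⟩ := (sin_pi_mul_div_eq_zero_iff hl.pos.ne').1 (hl.apply_eq_apply_iff.1 hst)
  have hL := hl.pos
  have hm₁ : (m : ℝ) < 1 := by nlinarith [hs.2, ht.1]
  have hm₂ : (-1 : ℝ) < m := by nlinarith [hs.1, ht.2]
  obtain rfl : m = 0 := by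
    have : m < 1 := by exact_mod_cast hm₁
    have : -1 < m := by exact_mod_cast hm₂
    omega
  simpa [sub_eq_zero] using hm

section Complete

variable [CompleteSpace E]

theorem integrable_mul_mul_log_norm_sub (hl : IsSimpleClosedCurve L l) (hC : ContDiff ℝ 1 l)
    (hf : MemLp f 2 (volume.restrict (Ioc 0 L))) (hg : MemLp g 2 (volume.restrict (Ioc 0 L))) :
    Integrable (fun p : ℝ × ℝ ↦ f p.1 * g p.2 * log ‖l p.1 - l p.2‖)
      ((volume.restrict (Ioc 0 L)).prod (volume.restrict (Ioc 0 L))) := by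
  obtain ⟨W, hW⟩ := hl.exists_integral_abs_log_norm_sub_le hC
  have hlc := hC.continuous
  refine integrable_mul_mul_of_integral_abs_le (W := W) hf hg
    (k := fun p ↦ log ‖l p.1 - l p.2‖) ?_ (fun p ↦ ?_) (fun t ↦ ?_) fun t ↦ ?_
  · exact (measurable_log.comp (by fun_prop : Continuous fun p : ℝ × ℝ ↦
      ‖l p.1 - l p.2‖).measurable).aestronglyMeasurable
  · simp [norm_sub_rev]
  · exact (intervalIntegrable_iff_integrableOn_Ioc_of_le hl.pos.le).1
      (hl.intervalIntegrable_log_norm_sub hC t 0 L)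
  · simpa only [intervalIntegral.integral_of_le hl.pos.le] using hW t

theorem integral_mul_mul_log_norm_sub (hl : IsSimpleClosedCurve L l) (hC : ContDiff ℝ 1 l)
    (hf : MemLp f 2 (volume.restrict (Ioc 0 L))) (hg : MemLp g 2 (volume.restrict (Ioc 0 L))) :
    ∫ p : ℝ × ℝ, f p.1 * g p.2 * log ‖l p.1 - l p.2‖
        ∂(volume.restrict (Ioc 0 L)).prod (volume.restrict (Ioc 0 L)) =
      ∫ t in Ioc 0 L, g t * logPotential L l f t := by
  rw [integral_prod_symm _ (hl.integrable_mul_mul_log_norm_sub hC hf hg)]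
  simp_rw [logPotential, intervalIntegral.integral_of_le hl.pos.le, ← integral_const_mul]
  congr! 4
  ring

theorem intervalIntegrable_logPotential (hl : IsSimpleClosedCurve L l) (hC : ContDiff ℝ 1 l)
    (hf : MemLp f 2 (volume.restrict (Ioc 0 L))) :
    IntervalIntegrable (logPotential L l f) volume 0 L := by
  have h := (hl.integrable_mul_mul_log_norm_sub hC hf (memLp_const 1)).integral_prod_right
  rw [intervalIntegrable_iff_integrableOn_Ioc_of_le hl.pos.le]
  refine (integrable_congr (.of_forall fun t ↦ ?_)).1 h
  simp only [mul_one, logPotential, intervalIntegral.integral_of_le hl.pos.le]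

end Complete

theorem ae_eq_zero_of_integral_mul_logPotential_eq_zero [FiniteDimensional ℝ E]
    (hl : IsSimpleClosedCurve L l) (hC : ContDiff ℝ 1 l) {ζ : ℝ → ℝ}
    (hζ : MemLp ζ 2 (volume.restrict (Ioc 0 L))) (hmean : ∫ t in Ioc 0 L, ζ t = 0)
    (hzero : ∀ f : ℝ → ℝ, Continuous f → Periodic f L → ∫ s in (0 : ℝ)..L, f s = 0 →
      ∫ t in Ioc 0 L, ζ t * logPotential L l f t = 0) : ζ =ᵐ[volume.restrict (Ioc 0 L)] 0 := by
  borelize E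
  have := FiniteDimensional.complete ℝ E
  have hswap (f : ℝ → ℝ) (hf : Continuous f) (hfL : Periodic f L)
      (hf₀ : ∫ s in (0 : ℝ)..L, f s = 0) : ∫ s in (0 : ℝ)..L, f s * logPotential L l ζ s = 0 := by
    have hf₂ : MemLp f 2 (volume.restrict (Ioc 0 L)) :=
      memLp_two_restrict_Ioc_of_continuous hf 0 L
    rw [intervalIntegral.integral_of_le hl.pos.le,
      ← hl.integral_mul_mul_log_norm_sub hC hζ hf₂, ← integral_prod_swap]
    refine Eq.trans ?_ (hzero f hf hfL hf₀)
    rw [← hl.integral_mul_mul_log_norm_sub hC hf₂ hζ]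
    simp only [Prod.fst_swap, Prod.snd_swap, norm_sub_rev, mul_comm (ζ _)]
  have hconst := ae_eq_average_of_forall_integral_mul_eq_zero hl.pos
    (hl.intervalIntegrable_logPotential hC hζ) hswap
  refine ae_eq_zero_of_integral_log_norm_sub_eq_zero measurableSet_Ioc
    (ae_restrict_mem measurableSet_Ioc) hC.continuous.measurable hl.injOn_Ioc
    (hζ.integrable one_le_two) hmean (hl.integrable_mul_mul_log_norm_sub hC hζ hζ) ?_
  rw [hl.integral_mul_mul_log_norm_sub hC hζ hζ,
    integral_congr_ae (hconst.mono fun t ht ↦ congrArg (ζ t * ·) ht), integral_mul_const, hmean,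
    zero_mul]

end IsSimpleClosedCurve

section Density

/-- Restriction of continuous functions on the line to elements of `L²(a, b]`. -/
noncomputable def continuousToLpIoc (a b : ℝ) :
    C(ℝ, ℝ) →ₗ[ℝ] Lp ℝ 2 (volume.restrict (Ioc a b)) where
  toFun f := (memLp_two_restrict_Ioc_of_continuous f.continuous a b).toLp f
  map_add' _ _ := rfl
  map_smul' _ _ := rfl

theorem continuousToLpIoc_ae_eq (a b : ℝ) (f : C(ℝ, ℝ)) :
    continuousToLpIoc a b f =ᵐ[volume.restrict (Ioc a b)] f :=
  MemLp.coeFn_toLp (memLp_two_restrict_Ioc_of_continuous f.continuous a b)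

theorem norm_continuousToLpIoc_sq {a b : ℝ} (hab : a ≤ b) (f : C(ℝ, ℝ)) :
    ‖continuousToLpIoc a b f‖ ^ 2 = ∫ s in a..b, f s ^ 2 := by
  rw [← real_inner_self_eq_norm_sq, L2.inner_def, intervalIntegral.integral_of_le hab]
  refine integral_congr_ae ?_
  filter_upwards [continuousToLpIoc_ae_eq a b f] with s hs
  simp [hs, sq]

variable {E : Type*} [NormedAddCommGroup E] [InnerProductSpace ℝ E] [FiniteDimensional ℝ E]
  {L : ℝ} {l : ℝ → E}

theorem IsSimpleClosedCurve.topologicalClosure_map_continuousToLpIoc_eq_top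
    (hl : IsSimpleClosedCurve L l) (hC : ContDiff ℝ 1 l) {S : Submodule ℝ C(ℝ, ℝ)} (hone : 1 ∈ S)
    (hpot : ∀ f : ℝ → ℝ, Continuous f → Periodic f L → ∫ s in (0 : ℝ)..L, f s = 0 →
      ∃ g ∈ S, ⇑g = logPotential L l f) :
    (S.map (continuousToLpIoc 0 L)).topologicalClosure = ⊤ := by
  rw [Submodule.topologicalClosure_eq_top_iff, Submodule.eq_bot_iff]
  intro ζ hζ
  have horth (g : C(ℝ, ℝ)) (hg : g ∈ S) : ∫ t in Ioc 0 L, ζ t * g t = 0 := by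
    have := (Submodule.mem_orthogonal _ _).1 hζ _ (Submodule.mem_map_of_mem hg)
    rw [L2.inner_def] at this
    refine (integral_congr_ae ?_).trans this
    filter_upwards [continuousToLpIoc_ae_eq 0 L g] with t ht
    simp [ht]
  refine Lp.eq_zero_iff_ae_eq_zero.2 <|
    hl.ae_eq_zero_of_integral_mul_logPotential_eq_zero hC (Lp.memLp ζ)
      (by simpa using horth 1 hone) fun f hf hfL hf₀ ↦ ?_
  obtain ⟨g, hg, hgf⟩ := hpot f hf hfL hf₀
  rw [← hgf]
  exact horth g hg

theorem IsSimpleClosedCurve.exists_mem_integral_sub_sq_lt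
    (hl : IsSimpleClosedCurve L l) (hC : ContDiff ℝ 1 l) {S : Submodule ℝ C(ℝ, ℝ)} (hone : 1 ∈ S)
    (hpot : ∀ f : ℝ → ℝ, Continuous f → Periodic f L → ∫ s in (0 : ℝ)..L, f s = 0 →
      ∃ g ∈ S, ⇑g = logPotential L l f) (f : C(ℝ, ℝ)) {δ : ℝ} (hδ : 0 < δ) :
    ∃ g ∈ S, ∫ s in (0 : ℝ)..L, (f s - g s) ^ 2 < δ := by
  have hf : continuousToLpIoc 0 L f ∈ (S.map (continuousToLpIoc 0 L)).topologicalClosure := by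
    rw [hl.topologicalClosure_map_continuousToLpIoc_eq_top hC hone hpot]
    trivial
  obtain ⟨_, ⟨g, hg, rfl⟩, hfg⟩ := Metric.mem_closure_iff.1 hf (√δ) (Real.sqrt_pos.2 hδ)
  refine ⟨g, hg, ?_⟩
  rw [dist_eq_norm, ← map_sub] at hfg
  have := norm_continuousToLpIoc_sq hl.pos.le (f - g)
  simp only [ContinuousMap.sub_apply] at this
  rw [← this, ← Real.sq_sqrt hδ.le]
  gcongr

end Density

/-! ### Stability -/

section AsymptoticKernel

theorem avg_add {N : ℕ} (y z : Fin N → ℝ) : avg (y + z) = avg y + avg z := by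
  simp only [avg, Pi.add_apply, Finset.sum_add_distrib, mul_add]

theorem avg_smul {N : ℕ} (c : ℝ) (z : Fin N → ℝ) : avg (c • z) = c * avg z := by
  simp only [avg, Pi.smul_apply, smul_eq_mul, ← Finset.mul_sum]
  ring

open Matrix

variable {A : (N : ℕ) → Matrix (Fin N) (Fin N) ℝ}

/-- The filter on vectors `z` of the unit balls of all dimensions `N` along which `N → ∞` while
both the mean of `z` and the norm of `A N *ᵥ z` tend to zero. The estimate
`l2norm z ≤ C * (|avg z| + l2norm (A N *ᵥ z))` holds uniformly for large `N` once `l2norm z` tends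
to zero along it. -/
noncomputable def asymptoticKernel (A : (N : ℕ) → Matrix (Fin N) (Fin N) ℝ) :
    Filter (Σ N, Fin N → ℝ) :=
  comap (fun p ↦ (p.1, avg p.2, l2norm (A p.1 *ᵥ p.2))) (atTop ×ˢ 𝓝 0 ×ˢ 𝓝 0) ⊓
    𝓟 {p | l2norm p.2 ≤ 1}

theorem tendsto_asymptoticKernel :
    Tendsto (fun p ↦ (p.1, avg p.2, l2norm (A p.1 *ᵥ p.2))) (asymptoticKernel A)
      (atTop ×ˢ 𝓝 0 ×ˢ 𝓝 0) :=
  tendsto_comap.mono_left inf_le_left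

theorem tendsto_fst_asymptoticKernel : Tendsto Sigma.fst (asymptoticKernel A) atTop :=
  tendsto_fst.comp tendsto_asymptoticKernel

theorem tendsto_avg_asymptoticKernel :
    Tendsto (fun p ↦ avg p.2) (asymptoticKernel A) (𝓝 0) :=
  (tendsto_fst.comp tendsto_snd).comp tendsto_asymptoticKernel

theorem tendsto_l2norm_mulVec_asymptoticKernel :
    Tendsto (fun p ↦ l2norm (A p.1 *ᵥ p.2)) (asymptoticKernel A) (𝓝 0) :=
  (tendsto_snd.comp tendsto_snd).comp tendsto_asymptoticKernel

theorem eventually_l2norm_le_one : ∀ᶠ p in asymptoticKernel A, l2norm p.2 ≤ 1 :=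
  mem_inf_of_right (mem_principal_self _)

theorem exists_l2norm_le_of_tendsto_asymptoticKernel
    (h : Tendsto (fun p ↦ l2norm p.2) (asymptoticKernel A) (𝓝 0)) :
    ∃ C > 0, ∀ᶠ N in atTop, ∀ z : Fin N → ℝ, l2norm z ≤ C * (|avg z| + l2norm (A N *ᵥ z)) := by
  have hlt : ∀ᶠ p in asymptoticKernel A, l2norm p.2 < 1 := h.eventually_lt_const one_pos
  rw [asymptoticKernel, eventually_inf_principal, eventually_comap, ← nhds_prod_eq] at hlt
  obtain ⟨P, hP, Q, hQ, hPQ⟩ := eventually_prod_iff.1 hlt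
  obtain ⟨δ, hδ, hQ⟩ := Metric.eventually_nhds_iff.1 hQ
  refine ⟨δ⁻¹, inv_pos.2 hδ, hP.mono fun N hN z ↦ ?_⟩
  by_contra! hz
  have hsum : 0 ≤ |avg z| + l2norm (A N *ᵥ z) := add_nonneg (abs_nonneg _) (l2norm_nonneg _)
  have hz₀ : 0 < l2norm z := (mul_nonneg (inv_nonneg.2 hδ.le) hsum).trans_lt hz
  set c := (l2norm z)⁻¹
  have hc : 0 < c := inv_pos.2 hz₀
  have hcz : l2norm (c • z) = 1 := by rw [l2norm_smul, abs_of_pos hc, inv_mul_cancel₀ hz₀.ne']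
  have hsmall : c * |avg z| + c * l2norm (A N *ᵥ z) < δ := by
    rwa [← mul_add, inv_mul_lt_iff₀ hz₀, mul_comm, ← inv_mul_lt_iff₀ hδ]
  have hQc : Q (avg (c • z), l2norm (A N *ᵥ (c • z))) := by
    refine hQ (max_lt ?_ ?_)
    · rw [Real.dist_0_eq_abs, avg_smul, abs_mul, abs_of_pos hc]
      linarith [mul_nonneg hc.le (l2norm_nonneg (A N *ᵥ z))]
    · rw [Real.dist_0_eq_abs, abs_of_nonneg (l2norm_nonneg _), mulVec_smul, l2norm_smul,
        abs_of_pos hc]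
      linarith [mul_nonneg hc.le (abs_nonneg (avg z))]
  exact (hPQ hN hQc ⟨N, c • z⟩ rfl hcz.le).ne hcz

/-- The continuous functions `f` whose samples at the nodes of `x` are asymptotically orthogonal to
the asymptotic kernel of `A`. -/
def asymptoticAnnihilator (A : (N : ℕ) → Matrix (Fin N) (Fin N) ℝ) (x : (N : ℕ) → Fin N → ℝ) :
    Submodule ℝ C(ℝ, ℝ) where
  carrier := {f | Tendsto (fun p ↦ avg (f ∘ x p.1 * p.2)) (asymptoticKernel A) (𝓝 0)}
  add_mem' {f g} hf hg := by
    have := hf.add hg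
    simp only [← avg_add, ← add_mul, add_zero] at this
    exact this
  zero_mem' := tendsto_const_nhds.congr fun p ↦ by simp [avg]
  smul_mem' c f hf := by
    have := hf.const_mul c
    simp only [← avg_smul, ← smul_mul_assoc, mul_zero] at this
    exact this

variable {x : (N : ℕ) → Fin N → ℝ}

theorem mem_asymptoticAnnihilator {f : C(ℝ, ℝ)} : f ∈ asymptoticAnnihilator A x ↔
    Tendsto (fun p ↦ avg (f ∘ x p.1 * p.2)) (asymptoticKernel A) (𝓝 0) :=
  Iff.rfl

theorem one_mem_asymptoticAnnihilator : 1 ∈ asymptoticAnnihilator A x :=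
  tendsto_avg_asymptoticKernel.congr fun p ↦ by simp [avg]

theorem tendsto_avg_mul_of_tendsto_l2norm {w : (N : ℕ) → Fin N → ℝ}
    (hw : Tendsto (fun N ↦ l2norm (w N)) atTop (𝓝 0)) :
    Tendsto (fun p ↦ avg (w p.1 * p.2)) (asymptoticKernel A) (𝓝 0) := by
  refine squeeze_zero_norm' ?_ (hw.comp tendsto_fst_asymptoticKernel)
  filter_upwards [eventually_l2norm_le_one] with p hp
  exact (abs_avg_mul_le _ _).trans (mul_le_of_le_one_right (l2norm_nonneg _) hp)

theorem tendsto_avg_mul_mulVec {w : (N : ℕ) → Fin N → ℝ} {c : ℝ}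
    (hw : ∀ᶠ N in atTop, l2norm (w N) ≤ c) :
    Tendsto (fun p ↦ avg (w p.1 * A p.1 *ᵥ p.2)) (asymptoticKernel A) (𝓝 0) := by
  refine squeeze_zero_norm' ?_
    (by simpa using tendsto_l2norm_mulVec_asymptoticKernel.const_mul c)
  filter_upwards [tendsto_fst_asymptoticKernel.eventually hw] with p hp
  exact (abs_avg_mul_le _ _).trans (mul_le_mul_of_nonneg_right hp (l2norm_nonneg _))

theorem avg_vecMul_mul {N : ℕ} (w z : Fin N → ℝ) (M : Matrix (Fin N) (Fin N) ℝ) :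
    avg ((w ᵥ* M) * z) = avg (w * M *ᵥ z) :=
  congrArg ((N : ℝ)⁻¹ * ·) (dotProduct_mulVec w M z).symm

theorem IsNearlyUniformMesh.tendsto_l2norm_comp {L θ : ℝ} (hx : IsNearlyUniformMesh L θ x)
    (hL : 0 < L) {f : ℝ → ℝ} (hf : Continuous f) :
    Tendsto (fun N ↦ l2norm (f ∘ x N)) atTop (𝓝 √(L⁻¹ * ∫ s in 0..L, f s ^ 2)) := by
  refine (((hx.tendsto_riemannSum hL (hf.pow 2)).const_mul L⁻¹).sqrt).congr fun N ↦ ?_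
  rw [l2norm]
  congr 1
  simp only [Function.comp_apply, Pi.pow_apply]
  field_simp

theorem mem_asymptoticAnnihilator_of_forall_exists {L θ : ℝ} (hx : IsNearlyUniformMesh L θ x)
    (hL : 0 < L) {f : C(ℝ, ℝ)} (h : ∀ δ > 0, ∃ g ∈ asymptoticAnnihilator A x,
      ∫ s in (0 : ℝ)..L, (f s - g s) ^ 2 < δ) : f ∈ asymptoticAnnihilator A x := by
  rw [mem_asymptoticAnnihilator, Metric.tendsto_nhds]
  intro ε hε
  obtain ⟨g, hg, hfg⟩ := h (L * (ε / 2) ^ 2) (by positivity)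
  have hlim := hx.tendsto_l2norm_comp hL (f - g).continuous
  have hlt : √(L⁻¹ * ∫ s in (0 : ℝ)..L, (f s - g s) ^ 2) < ε / 2 := by
    rwa [Real.sqrt_lt' (by positivity), inv_mul_lt_iff₀ hL]
  have hg₀ := Metric.tendsto_nhds.1 (mem_asymptoticAnnihilator.1 hg) (ε / 2) (half_pos hε)
  filter_upwards [hg₀,
    tendsto_fst_asymptoticKernel.eventually (hlim.eventually_lt_const hlt),
    eventually_l2norm_le_one] with p hgp hlimp hp
  have hsplit : f ∘ x p.1 * p.2 = g ∘ x p.1 * p.2 + (f - g : C(ℝ, ℝ)) ∘ x p.1 * p.2 := by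
    ext i
    simp
    ring
  rw [dist_zero_right] at hgp ⊢
  rw [hsplit, avg_add, ← add_halves ε]
  refine (norm_add_le _ _).trans_lt (add_lt_add hgp ?_)
  calc _ ≤ _ := abs_avg_mul_le _ _
    _ ≤ _ := mul_le_of_le_one_right (l2norm_nonneg _) hp
    _ < _ := hlimp

end AsymptoticKernel

section Stability

open Matrix

theorem exists_contDiff_periodic_deriv_eq {L : ℝ} {f : ℝ → ℝ} (hf : Continuous f)
    (hfL : Periodic f L) (hf₀ : ∫ s in (0 : ℝ)..L, f s = 0) :
    ∃ φ : ℝ → ℝ, ContDiff ℝ 1 φ ∧ Periodic φ L ∧ deriv φ = f := by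
  have hderiv (t : ℝ) : HasDerivAt (fun t ↦ ∫ s in (0 : ℝ)..t, f s) (f t) t :=
    hf.integral_hasStrictDerivAt 0 t |>.hasDerivAt
  have hdf : deriv (fun t ↦ ∫ s in (0 : ℝ)..t, f s) = f := funext fun t ↦ (hderiv t).deriv
  refine ⟨fun t ↦ ∫ s in (0 : ℝ)..t, f s, ?_, fun t ↦ ?_, hdf⟩
  · exact contDiff_one_iff_deriv.2 ⟨fun t ↦ (hderiv t).differentiableAt, by rwa [hdf]⟩
  · have hshift := hfL.intervalIntegral_add_eq t 0
    rw [zero_add, hf₀] at hshift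
    simp only [← intervalIntegral.integral_add_adjacent_intervals (hf.intervalIntegrable 0 t)
      (hf.intervalIntegrable t (t + L)), hshift, add_zero]

theorem abs_mulVec_le {N : ℕ} {M : Matrix (Fin N) (Fin N) ℝ} {c : ℝ} (hM : ∀ i j, |M i j| ≤ c)
    (hc : 0 ≤ c) (z : Fin N → ℝ) (i : Fin N) : |(M *ᵥ z) i| ≤ N * c * l2norm z := by
  have hN : (N : ℝ) ≠ 0 := by exact_mod_cast (Fin.pos i).ne'
  have havg : (M *ᵥ z) i = N * avg (M i * z) := (mul_inv_cancel_left₀ hN _).symm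
  rw [havg, abs_mul, Nat.abs_cast, mul_assoc]
  gcongr
  exact (abs_avg_mul_le _ _).trans <|
    mul_le_mul_of_nonneg_right (l2norm_le_of_abs_le hc (hM i)) (l2norm_nonneg z)

theorem l2norm_mulVec_le {N : ℕ} {M : Matrix (Fin N) (Fin N) ℝ} {c : ℝ} (hM : ∀ i j, |M i j| ≤ c)
    (hc : 0 ≤ c) (z : Fin N → ℝ) : l2norm (M *ᵥ z) ≤ N * c * l2norm z :=
  l2norm_le_of_abs_le (mul_nonneg (by positivity) (l2norm_nonneg z)) (abs_mulVec_le hM hc z)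

variable {A : (N : ℕ) → Matrix (Fin N) (Fin N) ℝ} {x : (N : ℕ) → Fin N → ℝ}

theorem tendstoUniformlyOn_avg_mul {F : C(ℝ × ℝ, ℝ)} {K : NNReal} (hF : LipschitzWith K F)
    (hmem : ∀ s, F.curry s ∈ asymptoticAnnihilator A x) {S : Set ℝ} (hS : IsCompact S) :
    TendstoUniformlyOn (fun p s ↦ avg (F.curry s ∘ x p.1 * p.2)) 0 (asymptoticKernel A) S := by
  rw [← tendstoLocallyUniformlyOn_iff_tendstoUniformlyOn_of_compact hS,
    Metric.tendstoLocallyUniformlyOn_iff]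
  intro ε hε s _
  have hs := Metric.tendsto_nhds.1 (mem_asymptoticAnnihilator.1 (hmem s)) (ε / 2) (half_pos hε)
  have hδ : 0 < ε / 2 / (K + 1) := by positivity
  refine ⟨_, mem_nhdsWithin_of_mem_nhds (Metric.closedBall_mem_nhds s hδ), ?_⟩
  filter_upwards [hs, eventually_l2norm_le_one] with p hps hp t ht
  have hdiff : l2norm (F.curry t ∘ x p.1 - F.curry s ∘ x p.1) ≤ ε / 2 := by
    refine l2norm_le_of_abs_le (half_pos hε).le fun i ↦ ?_
    calc _ ≤ K * dist (t, x p.1 i) (s, x p.1 i) := hF.dist_le_mul (t, x p.1 i) (s, x p.1 i)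
      _ ≤ (K + 1) * (ε / 2 / (K + 1)) := by
        rw [dist_prod_same_right]
        gcongr
        · simp
        · exact ht
      _ = ε / 2 := by field_simp
  have hsplit : F.curry t ∘ x p.1 * p.2 = F.curry s ∘ x p.1 * p.2
      + (F.curry t ∘ x p.1 - F.curry s ∘ x p.1) * p.2 := by ring
  rw [dist_zero_right] at hps
  rw [Pi.zero_apply, dist_zero_left, hsplit, avg_add, ← add_halves ε]
  exact (norm_add_le _ _).trans_lt <| add_lt_add_of_lt_of_le hps <| (abs_avg_mul_le _ _).trans <|
    (mul_le_of_le_one_right (l2norm_nonneg _) hp).trans hdiff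

variable {E : Type*} [NormedAddCommGroup E] [InnerProductSpace ℝ E] {L : ℝ} {l : ℝ → E}
  {a b : (N : ℕ) → Fin N → ℝ}

theorem IsNearlyUniformMesh.exists_abs_comp_le {θ : ℝ} (hx : IsNearlyUniformMesh L θ x) (hL : 0 < L)
    {f : ℝ → ℝ} (hf : Continuous f) : ∃ B, 0 ≤ B ∧ ∀ᶠ N in atTop, ∀ i, |f (x N i)| ≤ B := by
  obtain ⟨B, hB⟩ := (isCompact_Icc (a := -1) (b := L + 1)).exists_bound_of_continuousOn
    hf.continuousOn
  exact ⟨|B|, abs_nonneg B, (hx.eventually_mem_Icc hL).mono fun N hN i ↦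
    (hB _ (hN i)).trans (le_abs_self B)⟩

namespace IsSimpleClosedCurve

theorem continuous_logPotential_deriv [CompleteSpace E] (hl : IsSimpleClosedCurve L l)
    (hC : ContDiff ℝ 1 l) {φ : ℝ → ℝ} (hφ : ContDiff ℝ 1 φ) (hφL : Periodic φ L) :
    Continuous (logPotential L l (deriv φ)) := by
  obtain ⟨m, hm, hmφ⟩ := hl.exists_continuous_eq_sub_mul_tangentKernel hC hφ hφL
  have heq : logPotential L l (deriv φ) = fun t ↦ -∫ s in (0 : ℝ)..L, m (s, t) := funext fun t ↦ by
    rw [hl.integral_sub_mul_tangentKernel hC hφ hφL hm hmφ, neg_neg]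
  rw [heq]
  exact (intervalIntegral.continuous_parametric_intervalIntegral_of_continuous'
    (by fun_prop) 0 L).neg

theorem tendsto_l2norm_vecMul_vortexMatrix_add_logPotential [CompleteSpace E]
    (hl : IsSimpleClosedCurve L l) (hC : ContDiff ℝ 3 l) (ha : IsNearlyUniformMesh L (1 / 2) a)
    (hb : IsNearlyUniformMesh L 0 b) {φ : ℝ → ℝ} (hφ : ContDiff ℝ 1 φ) (hφL : Periodic φ L) :
    Tendsto (fun N ↦ l2norm ((φ ∘ a N) ᵥ* vortexMatrix L l (a N) (b N)
      + logPotential L l (deriv φ) ∘ b N)) atTop (𝓝 0) := by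
  have hC₁ : ContDiff ℝ 1 l := hC.of_le (by norm_num)
  obtain ⟨m, hm, hmφ⟩ := hl.exists_continuous_eq_sub_mul_tangentKernel hC₁ hφ hφL
  obtain ⟨C, _, hcol⟩ := hl.exists_abs_one_vecMul_vortexMatrix_le hC ha hb
  obtain ⟨_, hsin⟩ := ha.exists_abs_cot_sub_halfCot_le hb hl.pos
  obtain ⟨B, hB₀, hB⟩ := hb.exists_abs_comp_le hl.pos hφ.continuous
  have hsum := Metric.tendstoUniformlyOn_iff.1 (ha.tendstoUniformlyOn_riemannSum hl.pos
    (F := fun t s ↦ m (s, t)) (by fun_prop) (isCompact_Icc (a := -1) (b := L + 1)))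
  rw [Metric.tendsto_nhds]
  intro ε hε
  have hlim := (tendsto_const_div_atTop_nhds_zero_nat (B * C)).eventually_le_const
    (by positivity : 0 < ε / 4)
  filter_upwards [hsum (ε / 4) (by positivity), hsin, hcol, hb.eventually_mem_Icc hl.pos, hB, hlim]
    with N hsum hsin hcol hbN hB hlim
  have hentry (j : Fin N) : ((φ ∘ a N) ᵥ* vortexMatrix L l (a N) (b N)
      + logPotential L l (deriv φ) ∘ b N) j =
      L / N * ∑ i, m (a N i, b N j) - (∫ s in (0 : ℝ)..L, m (s, b N j))
        + φ (b N j) * (1 ᵥ* vortexMatrix L l (a N) (b N)) j := by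
    rw [hl.integral_sub_mul_tangentKernel hC₁ hφ hφL hm hmφ]
    simp only [hmφ _ _ (hsin _ j).1, Pi.add_apply, vecMul, dotProduct, vortexMatrix, of_apply,
      Function.comp_apply, Pi.one_apply, one_mul, Finset.mul_sum, sub_mul, mul_sub,
      Finset.sum_sub_distrib, mul_left_comm]
    ring
  rw [dist_zero_right, norm_eq_abs, abs_of_nonneg (l2norm_nonneg _)]
  refine (l2norm_le_of_abs_le (half_pos hε).le fun j ↦ ?_).trans_lt (half_lt_self hε)
  rw [hentry]
  calc _ ≤ ε / 4 + B * (C / N) := by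
        refine (abs_add_le _ _).trans (add_le_add ?_ ?_)
        · rw [abs_sub_comm]
          exact (hsum _ (hbN j)).le
        · rw [abs_mul]
          gcongr
          · exact hB j
          · exact hcol j
    _ ≤ ε / 2 := by linarith [mul_div_assoc B C (N : ℝ)]

theorem exists_mem_asymptoticAnnihilator_eq_logPotential [CompleteSpace E]
    (hl : IsSimpleClosedCurve L l) (hC : ContDiff ℝ 3 l) (ha : IsNearlyUniformMesh L (1 / 2) a)
    (hb : IsNearlyUniformMesh L 0 b) {f : ℝ → ℝ} (hf : Continuous f) (hfL : Periodic f L)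
    (hf₀ : ∫ s in (0 : ℝ)..L, f s = 0) :
    ∃ g ∈ asymptoticAnnihilator (fun N ↦ vortexMatrix L l (a N) (b N)) b,
      ⇑g = logPotential L l f := by
  obtain ⟨φ, hφ, hφL, rfl⟩ := exists_contDiff_periodic_deriv_eq hf hfL hf₀
  refine ⟨⟨_, hl.continuous_logPotential_deriv (hC.of_le (by norm_num)) hφ hφL⟩, ?_, rfl⟩
  obtain ⟨B, hB₀, hB⟩ := ha.exists_abs_comp_le hl.pos hφ.continuous
  have hφa : ∀ᶠ N in atTop, l2norm (φ ∘ a N) ≤ B := hB.mono fun N ↦ l2norm_le_of_abs_le hB₀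
  have hdiff := (tendsto_avg_mul_of_tendsto_l2norm
    (hl.tendsto_l2norm_vecMul_vortexMatrix_add_logPotential hC ha hb hφ hφL)).sub
    (tendsto_avg_mul_mulVec (A := fun N ↦ vortexMatrix L l (a N) (b N)) hφa)
  rw [sub_zero] at hdiff
  refine mem_asymptoticAnnihilator.2 (hdiff.congr fun p ↦ ?_)
  rw [add_mul, avg_add, avg_vecMul_mul, add_sub_cancel_left]
  rfl

theorem asymptoticAnnihilator_vortexMatrix_eq_top [FiniteDimensional ℝ E]
    (hl : IsSimpleClosedCurve L l) (hC : ContDiff ℝ 3 l) (ha : IsNearlyUniformMesh L (1 / 2) a)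
    (hb : IsNearlyUniformMesh L 0 b) :
    asymptoticAnnihilator (fun N ↦ vortexMatrix L l (a N) (b N)) b = ⊤ := by
  have := FiniteDimensional.complete ℝ E
  exact Submodule.eq_top_iff'.2 fun f ↦
    mem_asymptoticAnnihilator_of_forall_exists hb hl.pos fun δ hδ ↦
      hl.exists_mem_integral_sub_sq_lt (hC.of_le (by norm_num)) one_mem_asymptoticAnnihilator
        (fun f ↦ hl.exists_mem_asymptoticAnnihilator_eq_logPotential hC ha hb) f hδ

theorem tendsto_l2norm_regularMatrix_mulVec [FiniteDimensional ℝ E]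
    (hl : IsSimpleClosedCurve L l) (hC : ContDiff ℝ 3 l) (ha : IsNearlyUniformMesh L (1 / 2) a)
    (hb : IsNearlyUniformMesh L 0 b) :
    Tendsto (fun p ↦ l2norm (regularMatrix L l (a p.1) (b p.1) *ᵥ p.2))
      (asymptoticKernel fun N ↦ vortexMatrix L l (a N) (b N)) (𝓝 0) := by
  have := FiniteDimensional.complete ℝ E
  obtain ⟨K, hK⟩ := hl.exists_lipschitzWith_regularPart hC
  have hunif := Metric.tendstoUniformlyOn_iff.1 <|
    tendstoUniformlyOn_avg_mul (F := ⟨_, hK.continuous⟩) hK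
    (fun s ↦ by rw [hl.asymptoticAnnihilator_vortexMatrix_eq_top hC ha hb]; trivial)
    (isCompact_Icc (a := -1) (b := L + 1))
  rw [Metric.tendsto_nhds]
  intro ε hε
  have hL := hl.pos
  filter_upwards [hunif (ε / (2 * L)) (by positivity),
    tendsto_fst_asymptoticKernel.eventually (ha.eventually_mem_Icc hl.pos)] with p hunif hap
  rw [dist_zero_right, norm_eq_abs, abs_of_nonneg (l2norm_nonneg _)]
  refine (l2norm_le_of_abs_le (half_pos hε).le fun i ↦ ?_).trans_lt (half_lt_self hε)
  have hentry : (regularMatrix L l (a p.1) (b p.1) *ᵥ p.2) i =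
      L * avg ((fun t ↦ regularPart L l (a p.1 i, t)) ∘ b p.1 * p.2) := by
    simp only [regularMatrix, mulVec, dotProduct, of_apply, avg, Pi.mul_apply,
      Function.comp_apply, mul_assoc, ← Finset.mul_sum, div_eq_mul_inv]
  have hlt := hunif _ (hap i)
  rw [Pi.zero_apply, dist_zero_left] at hlt
  rw [hentry, abs_mul, abs_of_pos hL]
  calc _ ≤ L * (ε / (2 * L)) := mul_le_mul_of_nonneg_left hlt.le hL.le
    _ = ε / 2 := by field_simp

theorem exists_l2norm_discreteHilbert_mulVec_le [CompleteSpace E]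
    (hl : IsSimpleClosedCurve L l) (hC : ContDiff ℝ 2 l) (ha : IsNearlyUniformMesh L (1 / 2) a)
    (hb : IsNearlyUniformMesh L 0 b) :
    ∃ C, 0 ≤ C ∧ ∀ᶠ N : ℕ in atTop, ∀ z, π * l2norm (discreteHilbert N *ᵥ z) ≤
      l2norm (vortexMatrix L l (a N) (b N) *ᵥ z) + l2norm (regularMatrix L l (a N) (b N) *ᵥ z)
        + C / N * l2norm z := by
  obtain ⟨C, hC₀, herr⟩ := hl.exists_abs_vortexMatrix_sub_le hC ha hb
  refine ⟨C, hC₀, ?_⟩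
  filter_upwards [herr, eventually_ne_atTop 0] with N herr hN z
  set V := vortexMatrix L l (a N) (b N)
  set R := regularMatrix L l (a N) (b N)
  set D := V - (π • discreteHilbert N + R)
  have hsplit : π • (discreteHilbert N *ᵥ z) = V *ᵥ z - R *ᵥ z - D *ᵥ z := by
    simp only [D, sub_mulVec, add_mulVec, smul_mulVec]
    abel
  have hD : l2norm (D *ᵥ z) ≤ C / N * l2norm z :=
    (l2norm_mulVec_le herr (by positivity) z).trans_eq (by field_simp)
  rw [← abs_of_pos pi_pos, ← l2norm_smul, hsplit]
  exact (l2norm_sub_le _ _).trans (add_le_add (l2norm_sub_le _ _) hD)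

theorem tendsto_l2norm_discreteHilbert_mulVec [FiniteDimensional ℝ E]
    (hl : IsSimpleClosedCurve L l) (hC : ContDiff ℝ 3 l) (ha : IsNearlyUniformMesh L (1 / 2) a)
    (hb : IsNearlyUniformMesh L 0 b) :
    Tendsto (fun p ↦ l2norm (discreteHilbert p.1 *ᵥ p.2))
      (asymptoticKernel fun N ↦ vortexMatrix L l (a N) (b N)) (𝓝 0) := by
  have := FiniteDimensional.complete ℝ E
  obtain ⟨C, hC₀, hH⟩ := hl.exists_l2norm_discreteHilbert_mulVec_le (hC.of_le (by norm_num)) ha hb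
  have hbound := ((tendsto_l2norm_mulVec_asymptoticKernel.add
    (hl.tendsto_l2norm_regularMatrix_mulVec hC ha hb)).add
      ((tendsto_const_div_atTop_nhds_zero_nat C).comp tendsto_fst_asymptoticKernel)).const_mul π⁻¹
  simp only [add_zero, mul_zero] at hbound
  refine squeeze_zero' (.of_forall fun p ↦ l2norm_nonneg _) ?_ hbound
  filter_upwards [tendsto_fst_asymptoticKernel.eventually hH, eventually_l2norm_le_one]
    with p hH hp
  rw [le_inv_mul_iff₀ pi_pos]
  exact (hH p.2).trans <|
    add_le_add_right (mul_le_of_le_one_right (div_nonneg hC₀ p.1.cast_nonneg) hp) _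

theorem exists_l2norm_le_vortexMatrix_mulVec [FiniteDimensional ℝ E]
    (hl : IsSimpleClosedCurve L l) (hC : ContDiff ℝ 3 l) (ha : IsNearlyUniformMesh L (1 / 2) a)
    (hb : IsNearlyUniformMesh L 0 b) :
    ∃ C > 0, ∀ᶠ N in atTop, ∀ z : Fin N → ℝ,
      l2norm z ≤ C * (|avg z| + l2norm (vortexMatrix L l (a N) (b N) *ᵥ z)) := by
  refine exists_l2norm_le_of_tendsto_asymptoticKernel <|
    squeeze_zero (fun p ↦ l2norm_nonneg _)
      (fun p ↦ l2norm_le_abs_avg_add_discreteHilbert p.2) ?_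
  simpa using tendsto_avg_asymptoticKernel.abs.add
    (hl.tendsto_l2norm_discreteHilbert_mulVec hC ha hb)

end IsSimpleClosedCurve

end Stability

/-! ### The augmented system -/

section AugmentedSystem

open Matrix

theorem l2norm_eq_zero {N : ℕ} {z : Fin N → ℝ} : l2norm z = 0 ↔ z = 0 := by
  rcases eq_or_ne N 0 with rfl | hN
  · simp [l2norm, Subsingleton.elim z 0]
  · simp [l2norm_eq_norm_toLp, hN]

theorem abs_avg_mulVec_le {N : ℕ} {A : Matrix (Fin N) (Fin N) ℝ} {c : ℝ} (hc : 0 ≤ c)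
    (hA : ∀ j, |(1 ᵥ* A) j| ≤ c) (z : Fin N → ℝ) : |avg (A *ᵥ z)| ≤ c * l2norm z := by
  calc |avg (A *ᵥ z)| = |avg ((1 ᵥ* A) * z)| := by rw [avg_vecMul_mul, one_mul]
    _ ≤ l2norm (1 ᵥ* A) * l2norm z := abs_avg_mul_le _ _
    _ ≤ c * l2norm z := by
      gcongr
      exacts [l2norm_nonneg z, l2norm_le_of_abs_le hc hA]

variable {n : ℕ}

theorem l2norm_le_l2norm_init_add (y : Fin (n + 1) → ℝ) :
    l2norm y ≤ l2norm (Fin.init y) + |y (Fin.last n)| / √(n + 1 : ℕ) := by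
  have hinit : ((n + 1 : ℕ) : ℝ)⁻¹ * ∑ i, Fin.init y i ^ 2 ≤ l2norm (Fin.init y) ^ 2 := by
    rw [l2norm_sq]
    rcases eq_or_ne n 0 with rfl | hn
    · simp
    · gcongr
      omega
  refine le_of_sq_le_sq ?_ (add_nonneg (l2norm_nonneg _) (by positivity))
  calc l2norm y ^ 2
    _ = ((n + 1 : ℕ) : ℝ)⁻¹ * ∑ i, Fin.init y i ^ 2 + (|y (Fin.last n)| / √(n + 1 : ℕ)) ^ 2 := by
      rw [l2norm_sq, Fin.sum_univ_castSucc, div_pow, sq_abs, Real.sq_sqrt (by positivity)]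
      simp only [Fin.init]
      ring
    _ ≤ (l2norm (Fin.init y) + |y (Fin.last n)| / √(n + 1 : ℕ)) ^ 2 := by
      have := l2norm_nonneg (Fin.init y)
      have : 0 ≤ l2norm (Fin.init y) * (|y (Fin.last n)| / √(n + 1 : ℕ)) := by positivity
      linarith

theorem abs_last_le (y : Fin (n + 1) → ℝ) :
    |y (Fin.last n)| ≤ (n + 1 : ℕ) * (|avg y| + |avg (Fin.init y)|) := by
  have hlast : y (Fin.last n) = (n + 1 : ℕ) * avg y - n * avg (Fin.init y) := by
    have hinit : (n : ℝ) * avg (Fin.init y) = ∑ i, Fin.init y i := by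
      rcases eq_or_ne n 0 with rfl | hn
      · simp
      · simp [avg, hn]
    rw [hinit, avg, mul_inv_cancel_left₀ (by positivity), Fin.sum_univ_castSucc]
    simp [Fin.init]
  rw [hlast, mul_add]
  refine (abs_sub _ _).trans ?_
  rw [abs_mul, abs_mul, Nat.abs_cast, Nat.abs_cast]
  gcongr
  omega

theorem l2norm_le_init (y : Fin (n + 1) → ℝ) :
    l2norm y ≤ l2norm (Fin.init y) + √(n + 1 : ℕ) * (|avg y| + |avg (Fin.init y)|) := by
  refine (l2norm_le_l2norm_init_add y).trans ?_
  gcongr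
  rw [div_le_iff₀ (by positivity), mul_right_comm, Real.mul_self_sqrt (by positivity)]
  exact abs_last_le y

variable {A : Matrix (Fin (n + 1)) (Fin (n + 1)) ℝ} {C c : ℝ}

theorem l2norm_le_init_mulVec (hC : 0 ≤ C)
    (hstable : ∀ z, l2norm z ≤ C * (|avg z| + l2norm (A *ᵥ z))) (hc : 0 ≤ c)
    (hA : ∀ j, |(1 ᵥ* A) j| ≤ c) (hsmall : C * (√(n + 1 : ℕ) * c) ≤ 1 / 2)
    (z : Fin (n + 1) → ℝ) :
    l2norm z ≤ 2 * C * (l2norm (Fin.init (A *ᵥ z)) + |avg z|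
      + √(n + 1 : ℕ) * |avg (Fin.init (A *ᵥ z))|) := by
  have hrow : l2norm (A *ᵥ z) ≤ l2norm (Fin.init (A *ᵥ z))
      + √(n + 1 : ℕ) * (c * l2norm z + |avg (Fin.init (A *ᵥ z))|) :=
    (l2norm_le_init _).trans (by gcongr; exact abs_avg_mulVec_le hc hA z)
  have habsorb : C * (√(n + 1 : ℕ) * c) * l2norm z ≤ 1 / 2 * l2norm z :=
    mul_le_mul_of_nonneg_right hsmall (l2norm_nonneg z)
  have := (hstable z).trans (mul_le_mul_of_nonneg_left (add_le_add_right hrow _) hC)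
  linarith

/-- The square linear system in which the last equation of `A *ᵥ z = v` is replaced by prescribing
the mean value of `z`. -/
noncomputable def augmentedSystem (A : Matrix (Fin (n + 1)) (Fin (n + 1)) ℝ) :
    (Fin (n + 1) → ℝ) →ₗ[ℝ] (Fin n → ℝ) × ℝ where
  toFun z := (Fin.init (A *ᵥ z), avg z)
  map_add' y z := Prod.ext (by rw [mulVec_add]; rfl) (avg_add y z)
  map_smul' c z := Prod.ext (by rw [mulVec_smul]; rfl) (avg_smul c z)

theorem bijective_augmentedSystem
    (h : ∀ z, Fin.init (A *ᵥ z) = 0 → avg z = 0 → z = 0) : Bijective (augmentedSystem A) := by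
  have hinj : Injective (augmentedSystem A) :=
    (injective_iff_map_eq_zero _).2 fun z hz ↦ h z (congrArg Prod.fst hz) (congrArg Prod.snd hz)
  exact ⟨hinj, (LinearMap.injective_iff_surjective_of_finrank_eq_finrank (by simp)).1 hinj⟩

theorem existsUnique_init_mulVec_eq_and_avg_eq
    (h : ∀ z, Fin.init (A *ᵥ z) = 0 → avg z = 0 → z = 0) (v : Fin n → ℝ) (γ : ℝ) :
    ∃! z, Fin.init (A *ᵥ z) = v ∧ avg z = γ := by
  simpa only [augmentedSystem, LinearMap.coe_mk, AddHom.coe_mk, Prod.mk.injEq] using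
    (bijective_augmentedSystem h).existsUnique (v, γ)

end AugmentedSystem

theorem eventually_mul_sqrt_mul_div_le_half (C c : ℝ) :
    ∀ᶠ N : ℕ in atTop, C * (√N * (c / N)) ≤ 1 / 2 := by
  have hlim : Tendsto (fun N : ℕ ↦ C * c * (√N)⁻¹) atTop (𝓝 (C * c * 0)) :=
    (tendsto_inv_atTop_zero.comp <|
      tendsto_sqrt_atTop.comp tendsto_natCast_atTop_atTop).const_mul _
  rw [mul_zero] at hlim
  filter_upwards [hlim.eventually_le_const (by norm_num : (0 : ℝ) < 1 / 2)] with N hN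
  rwa [mul_div_left_comm, Real.sqrt_div_self', mul_one_div, ← mul_div_assoc,
    div_eq_mul_inv]

open Matrix in
theorem discrete_vortex_system_solvable_general {E : Type*} [NormedAddCommGroup E]
    [InnerProductSpace ℝ E] [FiniteDimensional ℝ E] {L : ℝ} {l : ℝ → E}
    (hl : IsSimpleClosedCurve L l) (hC : ContDiff ℝ 3 l) {a b : (N : ℕ) → Fin N → ℝ}
    (ha : IsNearlyUniformMesh L (1 / 2) a) (hb : IsNearlyUniformMesh L 0 b) :
    ∃ C > 0, ∀ᶠ n : ℕ in atTop, ∀ (v : Fin n → ℝ) (γ : ℝ),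
      (∃! z, Fin.init (vortexMatrix L l (a (n + 1)) (b (n + 1)) *ᵥ z) = v ∧ avg z = γ) ∧
      ∀ z, Fin.init (vortexMatrix L l (a (n + 1)) (b (n + 1)) *ᵥ z) = v ∧ avg z = γ →
        l2norm z ≤ C * (l2norm v + |γ| + √(n + 1 : ℕ) * |avg v|) := by
  obtain ⟨C, hC₀, hstable⟩ := hl.exists_l2norm_le_vortexMatrix_mulVec hC ha hb
  obtain ⟨c, hc, hcol⟩ := hl.exists_abs_one_vecMul_vortexMatrix_le hC ha hb
  refine ⟨2 * C, by positivity, ?_⟩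
  have hlarge := hstable.and (hcol.and (eventually_mul_sqrt_mul_div_le_half C c))
  filter_upwards [(tendsto_add_atTop_nat 1).eventually hlarge] with n ⟨hstable, hcol, hsmall⟩
  have hbound := l2norm_le_init_mulVec hC₀.le hstable (by positivity) hcol hsmall
  refine fun v γ ↦ ⟨existsUnique_init_mulVec_eq_and_avg_eq (fun z hz hγ ↦ ?_) v γ, ?_⟩
  · have hz₀ := hbound z
    rw [hz, hγ, l2norm_eq_zero.2 rfl] at hz₀
    exact l2norm_eq_zero.1 (le_antisymm (by simpa [avg] using hz₀) (l2norm_nonneg z))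
  · rintro z ⟨rfl, rfl⟩
    exact hbound z

theorem vortexMatrix_eq_smul_Bmat (L : ℝ) (l : ℝ → ℂ) {N : ℕ} (a b : Fin N → ℝ) :
    vortexMatrix L l a b = (L / N) • Bmat l a b := by
  ext i j
  have hinner (z w : ℂ) : inner ℝ z w = dotR z w := by simp [Complex.inner, dotR]; ring
  simp [vortexMatrix, Bmat, tangentKernel, hinner]

theorem isNearlyUniformMesh_of_abs_sub_le_div_pow {L θ M : ℝ} {κ : ℕ} (hM : 0 ≤ M) (hκ : 2 ≤ κ)
    {x : (N : ℕ) → Fin N → ℝ}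
    (hx : ∀ N, 2 ≤ N → ∀ i : Fin N, |x N i - (i + θ) * L / N| ≤ M / (N : ℝ) ^ (κ + 1)) :
    IsNearlyUniformMesh L θ x := by
  refine ⟨M, (eventually_ge_atTop 2).mono fun N hN i ↦ (hx N hN i).trans ?_⟩
  have hN : (1 : ℝ) ≤ N := by exact_mod_cast one_le_two.trans hN
  gcongr
  omega

/-- Unique solvability and stability of the discrete vortex system. -/
theorem discrete_vortex_system_solvable
    (L : ℝ) (hL : 0 < L) (l : ℝ → ℂ)
    (hsm : ContDiff ℝ (⊤ : ℕ∞) l) (hper : ∀ s, l (s + L) = l s)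
    (harc : ∀ s, ‖deriv l s‖ = 1) (hinj : Set.InjOn l (Set.Ico 0 L))
    (horient : ∃ z₀ : ℂ, (∀ s, l s ≠ z₀) ∧
      (∫ t in (0:ℝ)..L, deriv l t / (l t - z₀)) = 2 * (π : ℂ) * Complex.I)
    (κ : ℕ) (hκ : 2 ≤ κ) (M : ℝ) (hM : 0 < M)
    (ms mst : (N : ℕ) → Fin N → ℝ)
    (hms : ∀ N, 2 ≤ N → ∀ i : Fin N, ms N i ∈ Set.Ico (0:ℝ) L ∧
      |ms N i - ((i : ℕ) : ℝ) * L / (N : ℝ)| ≤ M / (N : ℝ) ^ (κ + 1))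
    (hmst : ∀ N, 2 ≤ N → ∀ i : Fin N, mst N i ∈ Set.Ico (0:ℝ) L ∧
      |mst N i - (((i : ℕ) : ℝ) + 1/2) * L / (N : ℝ)| ≤ M / (N : ℝ) ^ (κ + 1)) :
    ∃ C > 0, ∃ N₀ : ℕ, ∀ N : ℕ, N₀ ≤ N → ∀ v : Fin (N - 1) → ℝ, ∀ γ : ℝ,
      (∃! z : Fin N → ℝ,
        (∀ i : Fin (N - 1),
          (L / (N : ℝ)) * (Bmat l (mst N) (ms N)).mulVec z (Fin.castLE (Nat.sub_le N 1) i)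
            = v i) ∧ avg z = γ) ∧
      ∀ z : Fin N → ℝ,
        ((∀ i : Fin (N - 1),
          (L / (N : ℝ)) * (Bmat l (mst N) (ms N)).mulVec z (Fin.castLE (Nat.sub_le N 1) i)
            = v i) ∧ avg z = γ) →
        l2norm z ≤ C * (Real.sqrt (((N : ℝ) - 1)⁻¹ * ∑ i, v i ^ 2) + |γ|
          + Real.sqrt (N : ℝ) * |((N : ℝ) - 1)⁻¹ * ∑ i, v i|) := by
  have hl : IsSimpleClosedCurve L l :=
    ⟨hL, hper, fun s ↦ norm_ne_zero_iff.1 ((harc s).trans_ne one_ne_zero), hinj⟩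
  have hb : IsNearlyUniformMesh L 0 ms := isNearlyUniformMesh_of_abs_sub_le_div_pow hM.le hκ
    fun N hN i ↦ by simpa only [add_zero] using (hms N hN i).2
  have ha : IsNearlyUniformMesh L (1 / 2) mst :=
    isNearlyUniformMesh_of_abs_sub_le_div_pow hM.le hκ fun N hN i ↦ (hmst N hN i).2
  have hC : ContDiff ℝ 3 l := contDiff_infty.1 hsm 3
  obtain ⟨C, hC₀, h⟩ := discrete_vortex_system_solvable_general hl hC ha hb
  obtain ⟨n₀, h⟩ := eventually_atTop.1 h
  refine ⟨C, hC₀, n₀ + 1, fun N hN ↦ ?_⟩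
  obtain ⟨n, rfl⟩ : ∃ n, N = n + 1 := ⟨N - 1, by omega⟩
  have hcast : ((n + 1 : ℕ) : ℝ) - 1 = n := by simp
  simp only [vortexMatrix_eq_smul_Bmat, Matrix.smul_mulVec, funext_iff] at h
  rw [hcast]
  exact h n (by omega)
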